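/- Consider the detection problem: under the null distribution 𝒬, Ỹ ∈ ℝ^{N×n} has i.i.d. N(0, 1/N) entries; under the planted distribution 𝒫, first draw v ∼ BR(N,ρ) and a uniformly random orthogonal matrix Q ∈ ℝ^{n×n}, let Y have first column v and remaining columns i.i.d. N(0, (1/N) I_N), and observe Ỹ = YQ. Define M̃ := Σ_{i=1}^N (‖ỹ_i‖² − (n−1)/N) ỹ_i ỹ_iᵀ − (3/N) I_n, where ỹ_iᵀ are the rows of Ỹ. Fix a constant c₁ ∈ (0, 0.1). There exist constants C₂, c₃ > 0 depending only on c₁ such that for every δ ∈ (0,1/2): if ρ ≥ C₂·log(1/δ)/N, |ρ − 1/3| ≥ c₁, N ≥ log⁷(N/δ), and (nρ/√N + √(n/N))·log(N/δ) ≤ c₃, then ℙ_𝒫{‖M̃‖ < c₁/(4Nρ)} + ℙ_𝒬{‖M̃‖ > c₁/(8Nρ)} ≤ δ, where ‖M̃‖ is the spectral norm. -/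

import Mathlib

open MeasureTheory ProbabilityTheory Matrix

/-- Euclidean norm of a vector in `ℝ^k`. -/
noncomputable def eucNorm {k : ℕ} (v : Fin k → ℝ) : ℝ := Real.sqrt (∑ i, (v i) ^ 2)

/-- ℓ_p norm of a vector in `ℝ^k`. -/
noncomputable def lpNorm {k : ℕ} (p : ℝ) (v : Fin k → ℝ) : ℝ := (∑ i, |v i| ^ p) ^ (1 / p)

/-- Supremum (ℓ_∞) norm of a vector in `ℝ^k`. -/
noncomputable def supNorm {k : ℕ} (v : Fin k → ℝ) : ℝ := ⨆ i, |v i|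

/-- The Gaussian measure `N(0, σ2 · I_k)` on `ℝ^k`. -/
noncomputable def gaussVec (k : ℕ) (σ2 : NNReal) : Measure (Fin k → ℝ) :=
  Measure.pi fun _ => gaussianReal 0 σ2

instance (k : ℕ) (σ2 : NNReal) : IsProbabilityMeasure (gaussVec k σ2) := by
  unfold gaussVec; infer_instance

/-- The law of `N` i.i.d. samples from `N(0, σ2 · I_k)`. -/
noncomputable def iidGaussVec (N k : ℕ) (σ2 : NNReal) : Measure (Fin N → Fin k → ℝ) :=
  Measure.pi fun _ => gaussVec k σ2

/-- Concatenation `(a, bᵀ)ᵀ ∈ ℝ^n` of a scalar `a` with a vector `b ∈ ℝ^{n-1}`. -/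
noncomputable def rowCat {n : ℕ} (a : ℝ) (b : Fin (n - 1) → ℝ) : Fin n → ℝ :=
  fun j => if h : (j : ℕ) = 0 then a else b ⟨(j : ℕ) - 1, by have := j.isLt; omega⟩

/-- The `N × n` matrix whose rows are `y_iᵀ = (v_i, b_iᵀ)`, i.e. whose first column is `v`
and whose remaining `n - 1` columns are given by `B`. -/
noncomputable def gaussBasis {N n : ℕ} (v : Fin N → ℝ) (B : Fin N → Fin (n - 1) → ℝ) :
    Matrix (Fin N) (Fin n) ℝ :=
  Matrix.of fun i => rowCat (v i) (B i)

/-- The matrix `M(Y) = ∑_i (‖y_i‖² - (n-1)/N) y_i y_iᵀ - (3/N) I_n` built from the rows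
`y_iᵀ` of `Y`. -/
noncomputable def specMat {N n : ℕ} (Y : Matrix (Fin N) (Fin n) ℝ) :
    Matrix (Fin n) (Fin n) ℝ :=
  (∑ i, ((∑ j, (Y i j) ^ 2) - ((n : ℝ) - 1) / N) • Matrix.vecMulVec (Y i) (Y i))
    - ((3 : ℝ) / N) • (1 : Matrix (Fin n) (Fin n) ℝ)

/-- `u` is a unit leading eigenvector of the (symmetric) matrix `M`: a unit eigenvector
whose eigenvalue has the largest absolute value among all eigenvalues of `M`. -/
def IsLeadingEigen {n : ℕ} (M : Matrix (Fin n) (Fin n) ℝ) (u : Fin n → ℝ) : Prop :=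
  eucNorm u = 1 ∧ ∃ μ : ℝ, M.mulVec u = μ • u ∧
    ∀ μ' : ℝ, (∃ w : Fin n → ℝ, w ≠ 0 ∧ M.mulVec w = μ' • w) → |μ'| ≤ |μ|

/-- The quantity `η = η(N, n, v, δ)` with universal constant `C`. -/
noncomputable def etaBound (C : ℝ) (N n : ℕ) (v : Fin N → ℝ) (δ : ℝ) : ℝ :=
  C * ((eucNorm v + 1) * n * Real.sqrt (Real.log (N / δ)) / (N : ℝ) ^ ((3 : ℝ) / 2)
    + lpNorm 4 v ^ 2 * Real.sqrt (n * Real.log (N / δ)) / N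
    + lpNorm 6 v ^ 3 * (Real.sqrt n + Real.sqrt (Real.log (N / δ))) / Real.sqrt N
    + supNorm v ^ 2 * (n * Real.log (N / δ) + (Real.log (N / δ)) ^ 2) / N
    + (n * Real.log (N / δ)) ^ ((3 : ℝ) / 2) / (N : ℝ) ^ 2
    + |eucNorm v ^ 2 - 1| / N)

/-- The Bernoulli–Rademacher distribution on `ℝ`: `0` w.p. `1-ρ`, `±1/√(Nρ)` w.p. `ρ/2` each. -/
noncomputable def brMeasure (N : ℕ) (ρ : ℝ) : Measure ℝ :=
  (Real.toNNReal (1 - ρ)) • Measure.dirac 0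
    + (Real.toNNReal (ρ / 2)) • Measure.dirac (Real.sqrt (N * ρ))⁻¹
    + (Real.toNNReal (ρ / 2)) • Measure.dirac (-(Real.sqrt (N * ρ))⁻¹)

instance (N : ℕ) (ρ : ℝ) : IsFiniteMeasure (brMeasure N ρ) := by
  unfold brMeasure; infer_instance

/-- The law of a Bernoulli–Rademacher vector `v ∼ BR(N, ρ)` with i.i.d. entries. -/
noncomputable def brVec (N : ℕ) (ρ : ℝ) : Measure (Fin N → ℝ) :=
  Measure.pi fun _ => brMeasure N ρ

instance (N : ℕ) (ρ : ℝ) : IsFiniteMeasure (brVec N ρ) := by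
  unfold brVec; infer_instance

/-- Spectral (ℓ₂ operator) norm of a real matrix. -/
noncomputable def specNorm {m k : ℕ} (M : Matrix (Fin m) (Fin k) ℝ) : ℝ :=
  ‖LinearMap.toContinuousLinearMap (Matrix.toEuclideanLin M)‖

/-!
Let `e` be the first standard basis vector and `u = Qᵀ e` the planted direction, so that
`uᵀ M̃ u = eᵀ M e` by orthogonal invariance, where `M` is built from `Y = (v, B)`. The entries
`Nρ vᵢ²` are Bernoulli, so up to the fluctuations of `∑ᵢ vᵢ⁴` and of `∑ᵢ vᵢ² (‖bᵢ‖² - (n-1)/N)`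
this quadratic form equals `(1 - 3ρ) / (Nρ)`, of modulus at least `3c / (Nρ)` because ρ is away
from `1/3`; Bernstein-type bounds make each fluctuation smaller than `c / (Nρ)`.

Under the null, `‖M̃‖` is at most twice the maximum of `|uᵀ M̃ u|` over a `1/2`-net of at most `5ⁿ`
unit vectors. For fixed `u`, `N² uᵀ M̃ u` is a sum of i.i.d. centred copies of
`(‖x‖² - (n-1)) ⟨u, x⟩² - 3` with `x` standard Gaussian. These have no exponential moments, so
each row is restricted to the likely event `|‖x‖² - (n-1)| ≤ B`, with `B` of order `√n log(N/δ)`,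
on which the exponential moment at `1/√N` is finite and the Chernoff bound applies.
-/

section MGFBound

variable {Ω : Type*} [MeasurableSpace Ω] {X : Ω → ℝ} {μ : Measure Ω} {t c : ℝ}

/-- The exponential moment of `X` at `t` exists and is at most `exp c`. The measure need not be a
probability measure, so truncation to an event is expressed by restricting `μ`. -/
structure HasMGFBound (X : Ω → ℝ) (μ : Measure Ω) (t c : ℝ) : Prop where
  integrable_exp_mul : Integrable (fun ω => Real.exp (t * X ω)) μ
  mgf_le : mgf X μ t ≤ Real.exp c

namespace HasMGFBound

theorem mono {d : ℝ} (h : HasMGFBound X μ t c) (hcd : c ≤ d) : HasMGFBound X μ t d :=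
  ⟨h.integrable_exp_mul, h.mgf_le.trans (Real.exp_le_exp.2 hcd)⟩

theorem const_mul {a : ℝ} (h : HasMGFBound X μ (t * a) c) :
    HasMGFBound (fun ω => a * X ω) μ t c := by
  obtain ⟨hint, hle⟩ := h
  simp only [mgf, mul_assoc] at hint hle
  exact ⟨hint, hle⟩

theorem add_const (h : HasMGFBound X μ t c) (a : ℝ) :
    HasMGFBound (fun ω => X ω + a) μ t (c + t * a) := by
  constructor
  · simp only [mul_add, Real.exp_add]
    exact h.integrable_exp_mul.mul_const _
  · rw [mgf_add_const, Real.exp_add]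
    gcongr
    exact h.mgf_le

theorem of_identDistrib {Ω' : Type*} [MeasurableSpace Ω'] {Y : Ω' → ℝ} {ν : Measure Ω'}
    (h : HasMGFBound Y ν t c) (hXY : IdentDistrib X Y μ ν) : HasMGFBound X μ t c := by
  have hexp := hXY.comp (u := fun y => Real.exp (t * y)) (by fun_prop)
  exact ⟨hexp.integrable_iff.2 h.integrable_exp_mul, hexp.integral_eq.trans_le h.mgf_le⟩

theorem pi {ι : Type*} [Fintype ι] {E : ι → Type*} [∀ i, MeasurableSpace (E i)]
    {μ : ∀ i, Measure (E i)} [∀ i, SigmaFinite (μ i)] {X : ∀ i, E i → ℝ} {c : ι → ℝ}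
    (h : ∀ i, HasMGFBound (X i) (μ i) t (c i)) :
    HasMGFBound (fun ω => ∑ i, X i (ω i)) (Measure.pi μ) t (∑ i, c i) := by
  have hprod (ω : ∀ i, E i) : Real.exp (t * ∑ i, X i (ω i)) = ∏ i, Real.exp (t * X i (ω i)) := by
    rw [Finset.mul_sum, Real.exp_sum]
  constructor
  · simp only [hprod]
    exact Integrable.fintype_prod_dep fun i => (h i).integrable_exp_mul
  · simp only [mgf, hprod]
    rw [integral_fintype_prod_eq_prod (fun i x => Real.exp (t * X i x)), Real.exp_sum]
    exact Finset.prod_le_prod (fun _ _ => mgf_nonneg) fun i _ => (h i).mgf_le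

theorem measure_lt_le [IsFiniteMeasure μ] (h : HasMGFBound X μ t c) (ht : 0 ≤ t) (a : ℝ) :
    μ {ω | a < X ω} ≤ ENNReal.ofReal (Real.exp (c - t * a)) := by
  refine (measure_mono (t := {ω | a ≤ X ω}) fun _ => le_of_lt (α := ℝ)).trans ?_
  rw [ENNReal.le_ofReal_iff_toReal_le (measure_ne_top _ _) (Real.exp_pos _).le]
  calc μ.real {ω | a ≤ X ω} ≤ Real.exp (-t * a) * mgf X μ t :=
        measure_ge_le_exp_mul_mgf a ht h.integrable_exp_mul
    _ ≤ Real.exp (-t * a) * Real.exp c := by gcongr; exact h.mgf_le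
    _ = Real.exp (c - t * a) := by rw [← Real.exp_add]; ring_nf

theorem measure_lt_abs_le [IsFiniteMeasure μ] (hpos : HasMGFBound X μ t c)
    (hneg : HasMGFBound X μ (-t) c) (ht : 0 ≤ t) (a : ℝ) :
    μ {ω | a < |X ω|} ≤ ENNReal.ofReal (2 * Real.exp (c - t * a)) := by
  have hneg' : HasMGFBound (fun ω => -1 * X ω) μ t c := const_mul (by rwa [mul_neg_one])
  have hsub : {ω | a < |X ω|} ⊆ {ω | a < X ω} ∪ {ω | a < -1 * X ω} := fun ω hω => by
    simpa only [Set.mem_union, Set.mem_ofPred_eq, neg_one_mul] using lt_abs.1 hω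
  refine (measure_mono hsub).trans ((measure_union_le _ _).trans ?_)
  rw [two_mul, ENNReal.ofReal_add (Real.exp_pos _).le (Real.exp_pos _).le]
  exact add_le_add (hpos.measure_lt_le ht a) (hneg'.measure_lt_le ht a)

end HasMGFBound

theorem exp_le_one_add_add_sq_mul_exp_abs (y : ℝ) :
    Real.exp y ≤ 1 + y + y ^ 2 * Real.exp |y| := by
  have hone : 1 ≤ Real.exp |y| := Real.one_le_exp (abs_nonneg y)
  rcases le_or_gt |y| 1 with h | h
  · have := (abs_le.1 (Real.abs_exp_sub_one_sub_id_le h)).2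
    nlinarith [sq_nonneg y]
  · rcases le_or_gt 0 y with h0 | h0
    · rw [abs_of_nonneg h0] at h ⊢
      nlinarith [mul_nonneg (by nlinarith : (0 : ℝ) ≤ y ^ 2 - 1) (Real.exp_pos y).le]
    · rw [abs_of_neg h0] at h
      have : Real.exp y ≤ 1 := Real.exp_le_one_iff.2 h0.le
      nlinarith [sq_nonneg y]

theorem hasMGFBound_restrict_sub_integral [IsProbabilityMeasure μ] {h : Ω → ℝ} {s : Set Ω} {K : ℝ}
    (hs : MeasurableSet s) (hX : Integrable X μ) (h0 : ∀ ω, 0 ≤ h ω)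
    (hth : ∀ ω ∈ s, |t * X ω| ≤ h ω) (hXh : Integrable (fun ω => X ω ^ 2 * Real.exp (h ω)) μ)
    (hK : ∫ ω, X ω ^ 2 * Real.exp (h ω) ∂μ ≤ K) :
    HasMGFBound (fun ω => X ω - μ[X]) (μ.restrict s) t (K * t ^ 2) := by
  set g : Ω → ℝ := fun ω => 1 + t * X ω + t ^ 2 * (X ω ^ 2 * Real.exp (h ω))
  have hg0 (ω) : 0 ≤ g ω := by
    have := mul_le_mul_of_nonneg_left (Real.one_le_exp (h0 ω)) (sq_nonneg (t * X ω))
    simp only [g]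
    nlinarith [sq_nonneg (1 + t * X ω)]
  have hlin : Integrable (fun ω => 1 + t * X ω) μ := (integrable_const 1).add (hX.const_mul t)
  have hg : Integrable g μ := hlin.add (hXh.const_mul _)
  have hgint : ∫ ω, g ω ∂μ ≤ Real.exp (K * t ^ 2 + t * μ[X]) := by
    simp only [g]
    rw [integral_add hlin (hXh.const_mul _), integral_add (integrable_const 1) (hX.const_mul t),
      integral_const_mul, integral_const_mul, integral_const, probReal_univ, one_smul]
    refine le_trans ?_ (Real.add_one_le_exp _)
    linarith [mul_le_mul_of_nonneg_left hK (sq_nonneg t)]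
  have hle (ω) (hω : ω ∈ s) : Real.exp (t * X ω) ≤ g ω := by
    refine (exp_le_one_add_add_sq_mul_exp_abs _).trans ?_
    rw [mul_pow, mul_assoc]
    simp only [g]
    gcongr
    exact hth ω hω
  have hexp : IntegrableOn (fun ω => Real.exp (t * X ω)) s μ := by
    refine hg.integrableOn.mono'
      (Real.continuous_exp.comp_aestronglyMeasurable (hX.const_mul t).1).restrict ?_
    filter_upwards [ae_restrict_mem hs] with ω hω
    rw [Real.norm_of_nonneg (Real.exp_pos _).le]
    exact hle ω hω
  have hsplit (ω) :
      Real.exp (t * (X ω - μ[X])) = Real.exp (-(t * μ[X])) * Real.exp (t * X ω) := by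
    rw [← Real.exp_add]; ring_nf
  constructor
  · simp only [hsplit]
    exact hexp.const_mul _
  · simp only [mgf, hsplit]
    rw [integral_const_mul]
    calc Real.exp (-(t * μ[X])) * ∫ ω in s, Real.exp (t * X ω) ∂μ
        ≤ Real.exp (-(t * μ[X])) * Real.exp (K * t ^ 2 + t * μ[X]) := by
          gcongr
          exact (setIntegral_mono_on hexp hg.integrableOn hs hle).trans
            ((setIntegral_le_integral hg (ae_of_all _ hg0)).trans hgint)
      _ = Real.exp (K * t ^ 2) := by rw [← Real.exp_add]; ring_nf

end MGFBound

section GaussianMoments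

theorem integrable_pow_gaussianReal (k : ℕ) : Integrable (fun x => x ^ k) (gaussianReal 0 1) :=
  integrable_pow_of_mem_interior_integrableExpSet (X := fun x : ℝ => x)
    (by rw [integrableExpSet_fun_id_gaussianReal]; simp) k

theorem hasDerivAt_gaussianPDFReal (x : ℝ) :
    HasDerivAt (gaussianPDFReal 0 1) (-x * gaussianPDFReal 0 1 x) x := by
  have h : HasDerivAt (fun x : ℝ => -(x - 0) ^ 2 / (2 * (1 : NNReal))) (-x) x := by
    refine ((((hasDerivAt_id x).sub_const 0).pow 2).neg.div_const _).congr_deriv ?_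
    simp only [id_eq, Nat.cast_ofNat, NNReal.coe_one]
    ring
  refine (h.exp.const_mul _).congr_deriv ?_
  rw [gaussianPDFReal]
  ring

theorem integral_pow_add_two_gaussianReal (k : ℕ) :
    ∫ x, x ^ (k + 2) ∂(gaussianReal 0 1) = (k + 1) * ∫ x, x ^ k ∂(gaussianReal 0 1) := by
  have hint (m : ℕ) : Integrable (fun x => x ^ m * gaussianPDFReal 0 1 x) := by
    have h := integrable_pow_gaussianReal m
    rw [gaussianReal_of_var_ne_zero 0 one_ne_zero, integrable_withDensity_iff_integrable_smul'
      (measurable_gaussianPDF 0 1) (ae_of_all _ fun _ => by simp [gaussianPDF])] at h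
    refine h.congr (ae_of_all _ fun x => ?_)
    simp only [toReal_gaussianPDF, smul_eq_mul, mul_comm]
  have hparts := integral_mul_deriv_eq_deriv_mul_of_integrable
    (u := fun x : ℝ => x ^ (k + 1)) (u' := fun x => ((k + 1 : ℕ) : ℝ) * x ^ k)
    (fun x _ => hasDerivAt_pow (k + 1) x) (fun x _ => hasDerivAt_gaussianPDFReal x)
    ((hint (k + 2)).neg.congr
      (ae_of_all _ fun x => by simp only [Pi.mul_apply, Pi.neg_apply]; ring))
    (((hint k).const_mul (k + 1)).congr
      (ae_of_all _ fun x => by simp only [Pi.mul_apply]; push_cast; ring))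
    (hint (k + 1))
  simp only [integral_gaussianReal_eq_integral_smul one_ne_zero, smul_eq_mul]
  calc ∫ x, gaussianPDFReal 0 1 x * x ^ (k + 2)
      = -∫ x, x ^ (k + 1) * (-x * gaussianPDFReal 0 1 x) := by
        rw [← integral_neg]
        exact integral_congr_ae (ae_of_all _ fun x => by ring)
    _ = ∫ x, ((k + 1 : ℕ) : ℝ) * x ^ k * gaussianPDFReal 0 1 x := by rw [hparts, neg_neg]
    _ = (k + 1) * ∫ x, gaussianPDFReal 0 1 x * x ^ k := by
        rw [← integral_const_mul]
        exact integral_congr_ae (ae_of_all _ fun x => by push_cast; ring)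

theorem integral_sq_gaussianReal : ∫ x, x ^ 2 ∂(gaussianReal 0 1) = 1 := by
  simpa using integral_pow_add_two_gaussianReal 0

theorem integral_pow_four_gaussianReal : ∫ x, x ^ 4 ∂(gaussianReal 0 1) = 3 := by
  rw [integral_pow_add_two_gaussianReal 2, integral_sq_gaussianReal]
  norm_num

end GaussianMoments

section SpectralNorm

variable {E : Type*} [NormedAddCommGroup E]

theorem packingNumber_half_le [NormedSpace ℝ E] [FiniteDimensional ℝ E] {A : Set E}
    (hA : A ⊆ Metric.closedBall 0 1) :
    Metric.packingNumber (1 / 2) A ≤ 5 ^ Module.finrank ℝ E := by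
  classical
  have card_le (T : Finset E) (hTA : ↑T ⊆ A)
      (hT : Metric.IsSeparated ((1 / 2 : NNReal) : ENNReal) (T : Set E)) :
      T.card ≤ 5 ^ Module.finrank ℝ E := by
    have two_smul_inj : Function.Injective fun x : E => (2 : ℝ) • x :=
      smul_right_injective E two_ne_zero
    rw [← Finset.card_image_of_injective T two_smul_inj]
    refine Besicovitch.card_le_of_separated _ ?_ ?_
    · simp only [Finset.forall_mem_image, norm_smul, Real.norm_ofNat]
      intro x hx
      have := mem_closedBall_zero_iff.1 (hA (hTA hx))
      linarith
    · simp only [Finset.forall_mem_image, ← smul_sub, norm_smul, Real.norm_ofNat]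
      intro x hx y hy hxy
      have half_lt : ((1 / 2 : NNReal) : ENNReal) < edist x y := hT hx hy (ne_of_apply_ne _ hxy)
      rw [edist_nndist, ENNReal.coe_lt_coe, ← NNReal.coe_lt_coe, coe_nndist, dist_eq_norm]
        at half_lt
      push_cast at half_lt
      linarith
  refine iSup₂_le fun C hCA => iSup_le fun hC => ?_
  by_contra! h
  obtain ⟨T, hTC, card_T⟩ := Set.exists_subset_encard_eq (Order.add_one_le_of_lt h)
  lift T to Finset E using Set.finite_of_encard_eq_coe (k := 5 ^ Module.finrank ℝ E + 1)
    (by simpa using card_T)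
  have := card_le T (hTC.trans hCA) (hC.subset hTC)
  rw [Set.encard_coe_eq_coe_finsetCard] at card_T
  norm_cast at card_T
  omega

theorem exists_finset_half_net [NormedSpace ℝ E] [FiniteDimensional ℝ E] {A : Set E}
    (hA : A ⊆ Metric.closedBall 0 1) :
    ∃ T : Finset E, ↑T ⊆ A ∧ T.card ≤ 5 ^ Module.finrank ℝ E ∧
      ∀ x ∈ A, ∃ u ∈ T, ‖x - u‖ ≤ 1 / 2 := by
  have packing_le := packingNumber_half_le hA
  have packing_ne_top : Metric.packingNumber (1 / 2) A ≠ ⊤ :=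
    ne_top_of_le_ne_top (by simp) packing_le
  have finite_net : (Metric.maximalSeparatedSet (1 / 2) A).Finite := by
    rwa [← Set.encard_ne_top_iff, Metric.encard_maximalSeparatedSet packing_ne_top]
  refine ⟨finite_net.toFinset, by simpa using Metric.maximalSeparatedSet_subset, ?_, fun x hx => ?_⟩
  · rw [← Metric.encard_maximalSeparatedSet packing_ne_top, finite_net.encard_eq_coe_toFinset_card]
      at packing_le
    exact_mod_cast packing_le
  · have := (Metric.isCover_maximalSeparatedSet packing_ne_top).subset_iUnion_closedBall hx
    simpa [dist_eq_norm] using this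

variable [InnerProductSpace ℝ E] [FiniteDimensional ℝ E]

theorem exists_eigenvector_abs_eq_norm [Nontrivial E] {T : E →L[ℝ] E} (hT : IsSelfAdjoint T) :
    ∃ (x : E) (μ : ℝ), ‖x‖ = 1 ∧ T x = μ • x ∧ |μ| = ‖T‖ := by
  have : (spectrum ℝ T).Nonempty := by
    have := hT.isSymmetric.hasEigenvalue_iSup_of_finiteDimensional
    have := this.mem_spectrum
    rw [← AlgEquiv.spectrum_eq (Module.End.toContinuousLinearMap E)] at this
    exact ⟨_, this⟩
  obtain ⟨μ, hμ, norm_μ⟩ := spectrum.exists_nnnorm_eq_spectralRadius_of_nonempty this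
  rw [ContinuousLinearMap.spectralRadius_eq_nnnorm _ hT, ENNReal.coe_inj] at norm_μ
  rw [← AlgEquiv.spectrum_eq (Module.End.toContinuousLinearMap E).symm,
    ← Module.End.hasEigenvalue_iff_mem_spectrum] at hμ
  obtain ⟨y, hy⟩ := hμ.exists_hasEigenvector
  refine ⟨‖y‖⁻¹ • y, μ, norm_smul_inv_norm hy.2, ?_, congrArg NNReal.toReal norm_μ⟩
  rw [map_smul, smul_comm μ]
  exact congrArg _ hy.apply_eq_smul

theorem norm_le_two_mul_abs_inner {T : E →L[ℝ] E} (hT : IsSelfAdjoint T) {x u : E} {μ : ℝ}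
    (hx : ‖x‖ = 1) (hTx : T x = μ • x) (hμ : |μ| = ‖T‖) (hu : ‖u‖ = 1) (hxu : ‖x - u‖ ≤ 1 / 2) :
    ‖T‖ ≤ 2 * |inner ℝ u (T u)| := by
  obtain ⟨d, rfl⟩ : ∃ d, u = x + d := ⟨u - x, by abel⟩
  rw [sub_add_cancel_left, norm_neg] at hxu
  have inner_x_d : 2 * inner ℝ x d = -‖d‖ ^ 2 := by
    have := norm_add_sq_real x d
    rw [hu, hx] at this
    linarith
  have inner_x_Td : inner ℝ x (T d) = μ * inner ℝ x d := by
    rw [← hT.isSymmetric.apply_clm, hTx, real_inner_smul_left]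
  have quadForm : inner ℝ (x + d) (T (x + d)) = μ * (1 - ‖d‖ ^ 2) + inner ℝ d (T d) := by
    simp only [map_add, hTx, inner_add_left, inner_add_right, inner_x_Td, real_inner_smul_right,
      real_inner_self_eq_norm_sq, hx, real_inner_comm x d]
    linear_combination μ * inner_x_d
  have norm_d_sq : ‖d‖ ^ 2 ≤ 1 / 4 := by nlinarith [norm_nonneg d]
  have error_le : |inner ℝ d (T d)| ≤ ‖T‖ * ‖d‖ ^ 2 := by
    calc |inner ℝ d (T d)| ≤ ‖d‖ * ‖T d‖ := abs_real_inner_le_norm _ _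
      _ ≤ ‖d‖ * (‖T‖ * ‖d‖) := by gcongr; exact T.le_opNorm d
      _ = ‖T‖ * ‖d‖ ^ 2 := by ring
  have main_le : ‖T‖ * (1 - ‖d‖ ^ 2) ≤ |inner ℝ (x + d) (T (x + d))| + |inner ℝ d (T d)| := by
    rw [← hμ, ← abs_of_nonneg (show 0 ≤ 1 - ‖d‖ ^ 2 by linarith), ← abs_mul,
      show μ * (1 - ‖d‖ ^ 2) = inner ℝ (x + d) (T (x + d)) - inner ℝ d (T d) by rw [quadForm]; ring]
    exact abs_sub _ _
  nlinarith [norm_nonneg T]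

theorem inner_toEuclideanLin {n : ℕ} (M : Matrix (Fin n) (Fin n) ℝ) (x : EuclideanSpace ℝ (Fin n)) :
    inner ℝ x (toEuclideanLin M x) = x.ofLp ⬝ᵥ M *ᵥ x.ofLp := by
  rw [EuclideanSpace.inner_eq_star_dotProduct]
  simp [toLpLin_apply, dotProduct_comm]

theorem norm_toLp_sq {n : ℕ} (x : Fin n → ℝ) : ‖WithLp.toLp 2 x‖ ^ 2 = x ⬝ᵥ x := by
  rw [EuclideanSpace.real_norm_sq_eq]
  simp [dotProduct, sq]

theorem norm_toLp_eq_one_iff {n : ℕ} {u : Fin n → ℝ} : ‖WithLp.toLp 2 u‖ = 1 ↔ u ⬝ᵥ u = 1 := by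
  rw [← norm_toLp_sq, pow_eq_one_iff_of_nonneg (norm_nonneg _) two_ne_zero]

theorem abs_dotProduct_mulVec_le_specNorm {n : ℕ} (M : Matrix (Fin n) (Fin n) ℝ) {u : Fin n → ℝ}
    (hu : u ⬝ᵥ u = 1) : |u ⬝ᵥ M *ᵥ u| ≤ specNorm M := by
  have := (toEuclideanLin M).toContinuousLinearMap.le_opNorm (WithLp.toLp 2 u)
  rw [norm_toLp_eq_one_iff.2 hu, mul_one] at this
  calc |u ⬝ᵥ M *ᵥ u|
      = |inner ℝ (WithLp.toLp 2 u) (toEuclideanLin M (WithLp.toLp 2 u))| := by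
        rw [inner_toEuclideanLin]
    _ ≤ ‖WithLp.toLp 2 u‖ * ‖toEuclideanLin M (WithLp.toLp 2 u)‖ := abs_real_inner_le_norm _ _
    _ ≤ specNorm M := by rw [norm_toLp_eq_one_iff.2 hu, one_mul]; exact this

theorem exists_finset_specNorm_le (n : ℕ) [NeZero n] :
    ∃ T : Finset (Fin n → ℝ), (∀ u ∈ T, u ⬝ᵥ u = 1) ∧ T.card ≤ 5 ^ n ∧
      ∀ M : Matrix (Fin n) (Fin n) ℝ, M.IsSymm → ∃ u ∈ T, specNorm M ≤ 2 * |u ⬝ᵥ M *ᵥ u| := by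
  obtain ⟨T, unit_T, card_T, net_T⟩ := exists_finset_half_net
    (Metric.sphere_subset_closedBall (x := (0 : EuclideanSpace ℝ (Fin n))) (ε := 1))
  have norm_eq_one {u} (hu : u ∈ T) : ‖u‖ = 1 := mem_sphere_zero_iff_norm.1 (unit_T hu)
  refine ⟨T.map (WithLp.equiv 2 (Fin n → ℝ)).toEmbedding, ?_, by simpa using card_T, fun M hM => ?_⟩
  · simpa using fun u hu => norm_toLp_eq_one_iff.1 (norm_eq_one hu)
  · have selfAdjoint : IsSelfAdjoint (toEuclideanLin M).toContinuousLinearMap := by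
      rw [ContinuousLinearMap.isSelfAdjoint_iff_isSymmetric]
      exact isSymmetric_toEuclideanLin_iff.2 (by simpa [IsHermitian] using hM.eq)
    obtain ⟨x, μ, hx, hMx, hμ⟩ := exists_eigenvector_abs_eq_norm selfAdjoint
    obtain ⟨u, hu, hxu⟩ := net_T x (mem_sphere_zero_iff_norm.2 hx)
    refine ⟨u.ofLp, Finset.mem_map_of_mem _ hu, ?_⟩
    rw [← inner_toEuclideanLin]
    exact norm_le_two_mul_abs_inner selfAdjoint hx hMx hμ (norm_eq_one hu) hxu

theorem continuous_specNorm {m k : ℕ} :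
    Continuous (specNorm : Matrix (Fin m) (Fin k) ℝ → ℝ) :=
  continuous_norm.comp (LinearMap.toContinuousLinearMap.toLinearMap ∘ₗ
    (toEuclideanLin (𝕜 := ℝ) (m := Fin m) (n := Fin k)).toLinearMap).continuous_of_finiteDimensional

end SpectralNorm

section SpecMat

variable {N n : ℕ} (Y : Matrix (Fin N) (Fin n) ℝ)

theorem specMat_isSymm : (specMat Y).IsSymm := by
  simp [IsSymm, specMat, transpose_sum, transpose_vecMulVec]

theorem dotProduct_specMat_mulVec (u : Fin n → ℝ) :
    u ⬝ᵥ specMat Y *ᵥ u =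
      ∑ i, (Y i ⬝ᵥ Y i - ((n : ℝ) - 1) / N) * (u ⬝ᵥ Y i) ^ 2 - 3 / N * (u ⬝ᵥ u) := by
  simp only [specMat, sub_mulVec, sum_mulVec, smul_mulVec, one_mulVec, dotProduct_sub,
    dotProduct_sum, dotProduct_smul, vecMulVec_mulVec, smul_eq_mul]
  congr! 3 with i
  · simp [dotProduct, sq]
  · simp [sq, dotProduct_comm]

theorem specMat_mul_of_orthogonal {Q : Matrix (Fin n) (Fin n) ℝ} (hQ : Qᵀ * Q = 1) :
    specMat (Y * Q) = Qᵀ * specMat Y * Q := by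
  have norm_row (i : Fin N) : ∑ j, (Y * Q) i j ^ 2 = ∑ j, Y i j ^ 2 := by
    have : Y * Q * (Y * Q)ᵀ = Y * Yᵀ := by
      rw [transpose_mul, ← Matrix.mul_assoc, Matrix.mul_assoc Y, mul_eq_one_comm.1 hQ,
        Matrix.mul_one]
    simpa only [mul_apply, transpose_apply, ← sq] using congr_fun₂ this i i
  have outer_row (i : Fin N) :
      vecMulVec ((Y * Q) i) ((Y * Q) i) = Qᵀ * vecMulVec (Y i) (Y i) * Q := by
    rw [mul_vecMulVec, vecMulVec_mul, mulVec_transpose]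
    rfl
  simp only [specMat, norm_row, outer_row, Matrix.mul_sub, Matrix.sub_mul, Matrix.mul_sum,
    Matrix.sum_mul, Matrix.mul_smul, Matrix.smul_mul, Matrix.mul_one, hQ]

theorem abs_dotProduct_specMat_mulVec_le_specNorm_mul {Q : Matrix (Fin n) (Fin n) ℝ}
    (hQ : Qᵀ * Q = 1) {u : Fin n → ℝ} (hu : u ⬝ᵥ u = 1) :
    |u ⬝ᵥ specMat Y *ᵥ u| ≤ specNorm (specMat (Y * Q)) := by
  have mul_transpose : Q * Qᵀ = 1 := mul_eq_one_comm.1 hQ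
  have unit : (u ᵥ* Q) ⬝ᵥ (u ᵥ* Q) = 1 := by
    rw [← dotProduct_mulVec, ← mulVec_transpose, mulVec_mulVec, mul_transpose, one_mulVec, hu]
  have rotate : (u ᵥ* Q) ⬝ᵥ specMat (Y * Q) *ᵥ (u ᵥ* Q) = u ⬝ᵥ specMat Y *ᵥ u := by
    rw [specMat_mul_of_orthogonal Y hQ, Matrix.mul_assoc, ← mulVec_mulVec, ← dotProduct_mulVec,
      mulVec_mulVec _ Q, mul_transpose, one_mulVec, ← mulVec_mulVec,
      ← mulVec_transpose, mulVec_mulVec u Q, mul_transpose, one_mulVec]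
  exact rotate ▸ abs_dotProduct_mulVec_le_specNorm (specMat (Y * Q)) unit

theorem continuous_specNorm_specMat :
    Continuous fun Y : Fin N → Fin n → ℝ => specNorm (specMat (of Y)) := by
  have specMat_continuous : Continuous fun Y : Fin N → Fin n → ℝ => specMat (of Y) := by
    refine continuous_matrix fun j k => ?_
    simp only [specMat, Matrix.sub_apply, Matrix.sum_apply, Matrix.smul_apply, vecMulVec_apply,
      of_apply, smul_eq_mul]
    fun_prop
  exact continuous_specNorm.comp specMat_continuous

end SpecMat

section ChiSquared

theorem one_le_one_sub_mul_exp {y : ℝ} (hy : |y| ≤ 1 / 2) :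
    1 ≤ (1 - y) * Real.exp (y + y ^ 2) := by
  obtain ⟨hlb, hub⟩ := abs_le.1 hy
  rcases le_or_gt 0 y with h | h
  · have hquad := Real.quadratic_le_exp_of_nonneg (x := y + y ^ 2) (by positivity)
    refine le_trans ?_ (mul_le_mul_of_nonneg_left hquad (by linarith))
    have hrem : 0 ≤ y ^ 2 * ((1 - y) * (1 + y) ^ 2 / 2 - y) := by
      refine mul_nonneg (sq_nonneg _) ?_
      nlinarith [mul_nonneg h (sub_nonneg.2 hub), mul_nonneg h (mul_nonneg h (sub_nonneg.2 hub))]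
    nlinarith
  · refine le_trans ?_ (mul_le_mul_of_nonneg_left (Real.add_one_le_exp _) (by linarith))
    nlinarith [mul_nonneg (sq_nonneg y) (neg_nonneg.2 h.le)]

theorem exp_neg_mul_inv_sqrt_le {θ : ℝ} (hθ : |θ| ≤ 1 / 4) :
    Real.exp (-θ) * (√(1 - 2 * θ))⁻¹ ≤ Real.exp (2 * θ ^ 2) := by
  have hθ' := abs_le.1 hθ
  have h := one_le_one_sub_mul_exp (y := 2 * θ) (by rw [abs_mul]; norm_num; linarith)
  have hpos : 0 < √(1 - 2 * θ) := Real.sqrt_pos.2 (by linarith)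
  rw [← div_eq_mul_inv, div_le_iff₀ hpos, Real.exp_neg]
  refine le_of_sq_le_sq ?_ (by positivity)
  rw [mul_pow, Real.sq_sqrt (by linarith), inv_pow, inv_le_iff_one_le_mul₀ (by positivity)]
  refine h.trans_eq ?_
  rw [← Real.exp_nat_mul, ← Real.exp_nat_mul, mul_right_comm, ← Real.exp_add, mul_comm]
  congr 2
  push_cast; ring

theorem integrable_exp_mul_sq_gaussianReal {a : ℝ} (ha : a < 1 / 2) :
    Integrable (fun x => Real.exp (a * x ^ 2)) (gaussianReal 0 1) := by
  rw [gaussianReal_of_var_ne_zero 0 one_ne_zero,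
    integrable_withDensity_iff_integrable_smul' (measurable_gaussianPDF 0 1)
      (ae_of_all _ fun _ => by simp [gaussianPDF])]
  refine ((integrable_exp_neg_mul_sq (b := 1 / 2 - a) (by linarith)).const_mul
    (√(2 * Real.pi))⁻¹).congr (ae_of_all _ fun x => ?_)
  simp only [toReal_gaussianPDF, gaussianPDFReal, smul_eq_mul, NNReal.coe_one, mul_one, sub_zero]
  rw [mul_assoc, ← Real.exp_add]
  ring_nf

theorem integral_exp_mul_sq_gaussianReal {a : ℝ} (ha : a < 1 / 2) :
    ∫ x, Real.exp (a * x ^ 2) ∂(gaussianReal 0 1) = (√(1 - 2 * a))⁻¹ := by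
  have hdensity (x : ℝ) : gaussianPDFReal 0 1 x • Real.exp (a * x ^ 2) =
      (√(2 * Real.pi))⁻¹ * Real.exp (-(1 / 2 - a) * x ^ 2) := by
    simp only [gaussianPDFReal, smul_eq_mul, NNReal.coe_one, mul_one, sub_zero]
    rw [mul_assoc, ← Real.exp_add]
    ring_nf
  have h2a : 1 - 2 * a ≠ 0 := by linarith
  simp_rw [integral_gaussianReal_eq_integral_smul one_ne_zero, hdensity]
  rw [integral_const_mul, integral_gaussian, ← Real.sqrt_inv, ← Real.sqrt_mul (by positivity),
    ← Real.sqrt_inv]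
  congr 1
  field_simp

theorem hasMGFBound_sq_sub_one_gaussianReal {θ : ℝ} (hθ : |θ| ≤ 1 / 4) :
    HasMGFBound (fun x => x ^ 2 - 1) (gaussianReal 0 1) θ (2 * θ ^ 2) := by
  have hθ2 : θ < 1 / 2 := by linarith [le_abs_self θ]
  have hsplit (x : ℝ) : Real.exp (θ * (x ^ 2 - 1)) = Real.exp (-θ) * Real.exp (θ * x ^ 2) := by
    rw [← Real.exp_add]; ring_nf
  constructor
  · simp only [hsplit]
    exact (integrable_exp_mul_sq_gaussianReal hθ2).const_mul _
  · simp only [mgf, hsplit]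
    rw [integral_const_mul, integral_exp_mul_sq_gaussianReal hθ2]
    exact exp_neg_mul_inv_sqrt_le hθ

theorem hasMGFBound_mul_sq_gaussianReal {a : ℝ} (ha : a ≤ 3 / 8) :
    HasMGFBound (fun x => a * x ^ 2) (gaussianReal 0 1) 1 (Real.log 2) := by
  constructor
  · simpa only [one_mul] using integrable_exp_mul_sq_gaussianReal (by linarith)
  · simp only [mgf, one_mul]
    rw [integral_exp_mul_sq_gaussianReal (by linarith), Real.exp_log two_pos,
      inv_le_comm₀ (Real.sqrt_pos.2 (by linarith)) two_pos]
    exact Real.le_sqrt_of_sq_le (by linarith)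

theorem hasMGFBound_dotProduct_self_sub_gaussVec (n : ℕ) {θ : ℝ} (hθ : |θ| ≤ 1 / 4) :
    HasMGFBound (fun x => x ⬝ᵥ x - n) (gaussVec n 1) θ (2 * θ ^ 2 * n) := by
  have hsum (x : Fin n → ℝ) : x ⬝ᵥ x - n = ∑ j, (x j ^ 2 - 1) := by simp [dotProduct, sq]
  simp only [hsum]
  refine (HasMGFBound.pi fun _ : Fin n => hasMGFBound_sq_sub_one_gaussianReal hθ).mono ?_
  simp [mul_comm]

end ChiSquared

section RowForm

/-- The centred squared norm `‖x‖² - (n - 1)` weighting a (rescaled) row `x` in `specMat`. -/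
def rowDeviation {n : ℕ} (x : Fin n → ℝ) : ℝ := x ⬝ᵥ x - ((n : ℝ) - 1)

/-- The contribution `(‖x‖² - (n - 1)) ⟨u, x⟩²` of a (rescaled) row `x` to the quadratic form of
`specMat` in the direction `u`. -/
def rowForm {n : ℕ} (u x : Fin n → ℝ) : ℝ := rowDeviation x * (u ⬝ᵥ x) ^ 2

variable {n : ℕ} {u : Fin n → ℝ}

@[fun_prop]
theorem continuous_rowDeviation : Continuous (rowDeviation (n := n)) := by
  unfold rowDeviation dotProduct
  fun_prop

@[fun_prop]
theorem continuous_rowForm (u : Fin n → ℝ) : Continuous (rowForm u) := by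
  unfold rowForm dotProduct
  fun_prop

theorem identDistrib_dotProduct_gaussVec (hu : u ⬝ᵥ u = 1) (k : Fin n) :
    IdentDistrib (fun x => (x ⬝ᵥ x, u ⬝ᵥ x)) (fun x => (x ⬝ᵥ x, x k))
      (gaussVec n 1) (gaussVec n 1) := by
  have hunit : ‖WithLp.toLp 2 u‖ = 1 := norm_toLp_eq_one_iff.2 hu
  obtain ⟨b, hb⟩ := Orthonormal.exists_orthonormalBasis_extension_of_card_eq
    (𝕜 := ℝ) (E := EuclideanSpace ℝ (Fin n)) (ι := Fin n) (by simp)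
    (v := fun _ => WithLp.toLp 2 u) (s := {k})
    ⟨fun _ => hunit, fun i j hij => absurd (Subsingleton.elim i j) hij⟩
  have hbk : b k = WithLp.toLp 2 u := hb k rfl
  have hstd : (gaussVec n 1).map (WithLp.toLp 2) = stdGaussian (EuclideanSpace ℝ (Fin n)) :=
    map_pi_eq_stdGaussian
  have hrot : IdentDistrib (fun x => b.repr (WithLp.toLp 2 x)) (WithLp.toLp 2)
      (gaussVec n 1) (gaussVec n 1) := by
    refine ⟨by fun_prop, by fun_prop, ?_⟩
    change (gaussVec n 1).map (b.repr ∘ WithLp.toLp 2) = _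
    rw [← Measure.map_map (by fun_prop) (by fun_prop), hstd, stdGaussian_map]
  convert hrot.comp (u := fun z : EuclideanSpace ℝ (Fin n) => (‖z‖ ^ 2, z k)) (by fun_prop)
    using 1
  · ext x
    · simp only [Function.comp_apply, LinearIsometryEquiv.norm_map, norm_toLp_sq]
    · simp [b.repr_apply_apply, hbk, PiLp.inner_apply, dotProduct, mul_comm]
  · ext x
    · exact (norm_toLp_sq x).symm
    · rfl

theorem integrable_and_integral_sq_sub_one_mul_sq_gaussVec {j k : Fin n} (hjk : j ≠ k) :
    Integrable (fun x => (x j ^ 2 - 1) * x k ^ 2) (gaussVec n 1) ∧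
      ∫ x, (x j ^ 2 - 1) * x k ^ 2 ∂(gaussVec n 1) = 0 := by
  have hsub : Integrable (fun y => y ^ 2 - 1) (gaussianReal 0 1) :=
    (integrable_pow_gaussianReal 2).sub (integrable_const 1)
  have hj : Integrable (fun x => x j ^ 2 - 1) (gaussVec n 1) :=
    integrable_comp_eval (f := fun y => y ^ 2 - 1) hsub
  have hk : Integrable (fun x => x k ^ 2) (gaussVec n 1) :=
    integrable_comp_eval (f := (· ^ 2)) (integrable_pow_gaussianReal 2)
  have hind : IndepFun (fun x => x j ^ 2 - 1) (fun x => x k ^ 2) (gaussVec n 1) :=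
    ((iIndepFun_pi (μ := fun _ : Fin n => gaussianReal 0 1) (X := fun _ y => y)
      fun _ => aemeasurable_id).indepFun hjk).comp (φ := fun y => y ^ 2 - 1)
      (ψ := fun y => y ^ 2) (by fun_prop) (by fun_prop)
  have hzero : ∫ x, (x j ^ 2 - 1) ∂(gaussVec n 1) = 0 := by
    refine (integral_comp_eval (f := fun y => y ^ 2 - 1) (i := j) hsub.1).trans ?_
    rw [integral_sub (integrable_pow_gaussianReal 2) (integrable_const 1),
      integral_sq_gaussianReal]
    simp
  refine ⟨hind.integrable_mul hj hk, ?_⟩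
  rw [hind.integral_fun_mul_eq_mul_integral hj.1 hk.1, hzero, zero_mul]

theorem integrable_and_integral_rowDeviation_mul_sq_coord (k : Fin n) :
    Integrable (fun x => rowDeviation x * x k ^ 2) (gaussVec n 1) ∧
      ∫ x, rowDeviation x * x k ^ 2 ∂(gaussVec n 1) = 3 := by
  have hsplit : (fun x : Fin n → ℝ => rowDeviation x * x k ^ 2) =
      fun x => x k ^ 4 + ∑ j ∈ Finset.univ.erase k, (x j ^ 2 - 1) * x k ^ 2 := by
    ext x
    have hcard : ((Finset.univ.erase k).card : ℝ) = n - 1 := by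
      rw [Finset.card_erase_of_mem (Finset.mem_univ k), Finset.card_univ, Fintype.card_fin,
        Nat.cast_pred k.pos]
    rw [rowDeviation, dotProduct, ← Finset.add_sum_erase _ _ (Finset.mem_univ k),
      ← Finset.sum_mul, Finset.sum_sub_distrib, Finset.sum_const, nsmul_eq_mul, hcard]
    simp only [sq]
    ring
  have hoff (j) (hj : j ∈ Finset.univ.erase k) :=
    integrable_and_integral_sq_sub_one_mul_sq_gaussVec (Finset.ne_of_mem_erase hj)
  have h4 : Integrable (fun x => x k ^ 4) (gaussVec n 1) :=
    integrable_comp_eval (f := (· ^ 4)) (integrable_pow_gaussianReal 4)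
  have hsum : Integrable (fun x => ∑ j ∈ Finset.univ.erase k, (x j ^ 2 - 1) * x k ^ 2)
      (gaussVec n 1) := integrable_finsetSum _ fun j hj => (hoff j hj).1
  have h4eq : ∫ x, x k ^ 4 ∂(gaussVec n 1) = 3 :=
    (integral_comp_eval (f := (· ^ 4)) (integrable_pow_gaussianReal 4).1).trans
      integral_pow_four_gaussianReal
  rw [hsplit]
  refine ⟨h4.add hsum, ?_⟩
  rw [integral_add h4 hsum, integral_finsetSum _ fun j hj => (hoff j hj).1,
    Finset.sum_eq_zero fun j hj => (hoff j hj).2, h4eq, add_zero]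

theorem neZero_of_dotProduct_self_eq_one (hu : u ⬝ᵥ u = 1) : NeZero n :=
  ⟨by rintro rfl; simp at hu⟩

theorem integrable_and_integral_rowForm (hu : u ⬝ᵥ u = 1) :
    Integrable (rowForm u) (gaussVec n 1) ∧ ∫ x, rowForm u x ∂(gaussVec n 1) = 3 := by
  have := neZero_of_dotProduct_self_eq_one hu
  have hid : IdentDistrib (rowForm u) (fun x => rowDeviation x * x 0 ^ 2)
      (gaussVec n 1) (gaussVec n 1) :=
    (identDistrib_dotProduct_gaussVec hu 0).comp
      (u := fun p : ℝ × ℝ => (p.1 - ((n : ℝ) - 1)) * p.2 ^ 2) (by fun_prop)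
  obtain ⟨hint, heq⟩ := integrable_and_integral_rowDeviation_mul_sq_coord (0 : Fin n)
  exact ⟨hid.integrable_iff.2 hint, hid.integral_eq.trans heq⟩

theorem hasMGFBound_rowDeviation_add_sq_coord (k : Fin n) {τ : ℝ} (hτ : |τ| ≤ 1 / 8)
    (hτn : τ ^ 2 * n ≤ 1 / 64) :
    HasMGFBound (fun x => τ * rowDeviation x + x k ^ 2 / 4) (gaussVec n 1) 1 1 := by
  have hcoord (j : Fin n) :
      HasMGFBound (fun y => if j = k then (τ + 1 / 4) * y ^ 2 else τ * (y ^ 2 - 1))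
        (gaussianReal 0 1) 1 (if j = k then Real.log 2 else 2 * τ ^ 2) := by
    split_ifs
    · exact hasMGFBound_mul_sq_gaussianReal (by linarith [le_abs_self τ])
    · refine HasMGFBound.const_mul ?_
      rw [one_mul]
      exact hasMGFBound_sq_sub_one_gaussianReal (by linarith)
  have hsum (x : Fin n → ℝ) : τ * rowDeviation x + x k ^ 2 / 4 =
      ∑ j, if j = k then (τ + 1 / 4) * x j ^ 2 else τ * (x j ^ 2 - 1) := by
    have hterm (j) : (if j = k then (τ + 1 / 4) * x j ^ 2 else τ * (x j ^ 2 - 1)) =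
        τ * (x j * x j) - τ + if j = k then τ + x j ^ 2 / 4 else 0 := by
      split_ifs <;> ring
    simp only [hterm, Finset.sum_add_distrib, Finset.sum_sub_distrib, ← Finset.mul_sum,
      Finset.sum_ite_eq', Finset.mem_univ, if_true, rowDeviation, dotProduct, Finset.sum_const,
      Finset.card_univ, Fintype.card_fin, nsmul_eq_mul]
    ring
  simp only [hsum]
  refine (HasMGFBound.pi hcoord).mono ?_
  calc ∑ j, (if j = k then Real.log 2 else 2 * τ ^ 2)
      ≤ ∑ j, (2 * τ ^ 2 + if j = k then Real.log 2 else 0) := by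
        refine Finset.sum_le_sum fun j _ => ?_
        split_ifs <;> linarith [sq_nonneg τ]
    _ = 2 * (τ ^ 2 * n) + Real.log 2 := by
        simp [Finset.sum_add_distrib]; ring
    _ ≤ 1 := by linarith [Real.log_two_lt_d9]

theorem hasMGFBound_rowDeviation_add_sq_dotProduct (hu : u ⬝ᵥ u = 1) {τ : ℝ} (hτ : |τ| ≤ 1 / 8)
    (hτn : τ ^ 2 * n ≤ 1 / 64) :
    HasMGFBound (fun x => τ * rowDeviation x + (u ⬝ᵥ x) ^ 2 / 4) (gaussVec n 1) 1 1 := by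
  have := neZero_of_dotProduct_self_eq_one hu
  exact (hasMGFBound_rowDeviation_add_sq_coord 0 hτ hτn).of_identDistrib
    ((identDistrib_dotProduct_gaussVec hu 0).comp
      (u := fun p : ℝ × ℝ => τ * (p.1 - ((n : ℝ) - 1)) + p.2 ^ 2 / 4) (by fun_prop))

end RowForm

section RowFormTail

theorem sq_le_two_mul_exp_add_exp_neg (y : ℝ) : y ^ 2 ≤ 2 * (Real.exp y + Real.exp (-y)) := by
  have hquad := Real.quadratic_le_exp_of_nonneg (abs_nonneg y)
  have habs : Real.exp |y| ≤ Real.exp y + Real.exp (-y) := by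
    rcases abs_choice y with h | h <;> rw [h] <;> linarith [Real.exp_pos y, Real.exp_pos (-y)]
  rw [sq_abs] at hquad
  linarith [abs_nonneg y]

theorem sq_mul_sq_mul_exp_le {θ : ℝ} (hθ : θ ≠ 0) (w s : ℝ) :
    (w * s ^ 2) ^ 2 * Real.exp (s ^ 2 / 8) ≤
      256 / θ ^ 2 * (Real.exp (θ * w + s ^ 2 / 4) + Real.exp (-θ * w + s ^ 2 / 4)) := by
  have hw : w ^ 2 ≤ 2 / θ ^ 2 * (Real.exp (θ * w) + Real.exp (-θ * w)) := by
    have h := sq_le_two_mul_exp_add_exp_neg (θ * w)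
    rw [mul_pow, ← neg_mul] at h
    rw [div_mul_eq_mul_div, le_div_iff₀ (by positivity)]
    linarith
  have hs : (s ^ 2) ^ 2 ≤ 128 * Real.exp (s ^ 2 / 8) := by
    have h := Real.quadratic_le_exp_of_nonneg (x := s ^ 2 / 8) (by positivity)
    nlinarith [sq_nonneg s]
  have hexp : Real.exp (s ^ 2 / 4) = Real.exp (s ^ 2 / 8) * Real.exp (s ^ 2 / 8) := by
    rw [← Real.exp_add]; ring_nf
  calc (w * s ^ 2) ^ 2 * Real.exp (s ^ 2 / 8)
      = w ^ 2 * (s ^ 2) ^ 2 * Real.exp (s ^ 2 / 8) := by ring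
    _ ≤ (2 / θ ^ 2 * (Real.exp (θ * w) + Real.exp (-θ * w))) * (128 * Real.exp (s ^ 2 / 8)) *
          Real.exp (s ^ 2 / 8) := by gcongr
    _ = _ := by rw [Real.exp_add, Real.exp_add, hexp]; ring

variable {N n : ℕ} {u : Fin n → ℝ}

theorem inv_mul_sqrt_sq_mul_self [NeZero n] {a : ℝ} (ha : a ≠ 0) :
    (1 / (a * √(n : ℝ))) ^ 2 * n = 1 / a ^ 2 := by
  have hn : (n : ℝ) ≠ 0 := Nat.cast_ne_zero.2 (NeZero.ne n)
  rw [div_pow, mul_pow, Real.sq_sqrt n.cast_nonneg]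
  field_simp

theorem one_le_sqrt_natCast [NeZero n] : 1 ≤ √(n : ℝ) :=
  Real.one_le_sqrt.2 (Nat.one_le_cast.2 (NeZero.one_le))

theorem integrable_and_integral_sq_rowForm_mul_exp_le (hu : u ⬝ᵥ u = 1) :
    Integrable (fun x => rowForm u x ^ 2 * Real.exp ((u ⬝ᵥ x) ^ 2 / 8)) (gaussVec n 1) ∧
      ∫ x, rowForm u x ^ 2 * Real.exp ((u ⬝ᵥ x) ^ 2 / 8) ∂(gaussVec n 1) ≤ 100000 * n := by
  have := neZero_of_dotProduct_self_eq_one hu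
  set θ : ℝ := 1 / (8 * √(n : ℝ))
  have hs : 1 ≤ √(n : ℝ) := one_le_sqrt_natCast
  have hθ0 : 0 < θ := by positivity
  have hθ8 : θ ≤ 1 / 8 := one_div_le_one_div_of_le (by norm_num) (by linarith)
  have hθn : θ ^ 2 * n = 1 / 64 := (inv_mul_sqrt_sq_mul_self (by norm_num)).trans (by norm_num)
  have hscale : 256 / θ ^ 2 = 16384 * n := by
    rw [div_eq_iff (by positivity)]; linarith
  have hpos := hasMGFBound_rowDeviation_add_sq_dotProduct hu
    (by rwa [abs_of_pos hθ0]) hθn.le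
  have hneg := hasMGFBound_rowDeviation_add_sq_dotProduct hu (τ := -θ)
    (by rwa [abs_neg, abs_of_pos hθ0]) (by rw [neg_sq]; exact hθn.le)
  obtain ⟨hpint, hple⟩ := hpos
  obtain ⟨hnint, hnle⟩ := hneg
  simp only [mgf, one_mul] at hpint hple hnint hnle
  have hdom := (hpint.add hnint).const_mul (16384 * (n : ℝ))
  have hle (x : Fin n → ℝ) := hscale ▸ sq_mul_sq_mul_exp_le hθ0.ne' (rowDeviation x) (u ⬝ᵥ x)
  have hint : Integrable (fun x => rowForm u x ^ 2 * Real.exp ((u ⬝ᵥ x) ^ 2 / 8))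
      (gaussVec n 1) := by
    refine hdom.mono' ?_ (ae_of_all _ fun x => ?_)
    · simp only [dotProduct]
      fun_prop
    · rw [Real.norm_of_nonneg (by positivity)]
      exact hle x
  refine ⟨hint, (integral_mono hint hdom hle).trans ?_⟩
  simp only [Pi.add_apply]
  rw [integral_const_mul, integral_add hpint hnint]
  -- `256 * 64` is the constant of the pointwise bound, and each exponential moment is at most `e`.
  have he : Real.exp 1 ≤ 2.72 := by linarith [Real.exp_one_lt_d9]
  calc 16384 * (n : ℝ) * _ ≤ 16384 * (n : ℝ) * (2.72 + 2.72) := by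
        gcongr
        exacts [hple.trans he, hnle.trans he]
    _ ≤ 100000 * n := by linarith [n.cast_nonneg (α := ℝ)]

theorem hasMGFBound_rowForm_sub_restrict (hu : u ⬝ᵥ u = 1) {t B : ℝ} (htB : |t| * B ≤ 1 / 8) :
    HasMGFBound (fun x => rowForm u x - 3) ((gaussVec n 1).restrict {x | |rowDeviation x| ≤ B})
      t (100000 * n * t ^ 2) := by
  have := neZero_of_dotProduct_self_eq_one hu
  obtain ⟨hint, hmean⟩ := integrable_and_integral_rowForm hu
  obtain ⟨hsqint, hsqle⟩ := integrable_and_integral_sq_rowForm_mul_exp_le hu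
  rw [← hmean]
  refine hasMGFBound_restrict_sub_integral (measurableSet_le (by fun_prop) measurable_const) hint
    (fun x => by positivity) (fun x hx => ?_) hsqint hsqle
  calc |t * rowForm u x| = |t| * |rowDeviation x| * (u ⬝ᵥ x) ^ 2 := by
        rw [rowForm, abs_mul, abs_mul, abs_of_nonneg (sq_nonneg (u ⬝ᵥ x)), mul_assoc]
    _ ≤ |t| * B * (u ⬝ᵥ x) ^ 2 := by gcongr; exact hx
    _ ≤ 1 / 8 * (u ⬝ᵥ x) ^ 2 := by gcongr
    _ = (u ⬝ᵥ x) ^ 2 / 8 := by ring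

theorem iidGaussVec_lt_abs_sum_rowForm_sub_le [NeZero N] (hu : u ⬝ᵥ u = 1) {B : ℝ}
    (hB : B ≤ √(N : ℝ) / 8) (a : ℝ) :
    iidGaussVec N n 1 ({Y | a < |∑ i, (rowForm u (Y i) - 3)|} ∩ {Y | ∀ i, |rowDeviation (Y i)| ≤ B})
      ≤ ENNReal.ofReal (2 * Real.exp (100000 * n - a / √(N : ℝ))) := by
  set G : Set (Fin n → ℝ) := {x | |rowDeviation x| ≤ B} with hG
  have hGm : MeasurableSet G := measurableSet_le (by fun_prop) measurable_const
  have hs : 0 < √(N : ℝ) := zero_lt_one.trans_le one_le_sqrt_natCast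
  have hN : (N : ℝ) ≠ 0 := Nat.cast_ne_zero.2 (NeZero.ne N)
  have hmgf {t : ℝ} (ht : |t| = (√(N : ℝ))⁻¹) :
      HasMGFBound (fun Y : Fin N → Fin n → ℝ => ∑ i, (rowForm u (Y i) - 3))
        (Measure.pi fun _ => (gaussVec n 1).restrict G) t (100000 * n) := by
    refine (HasMGFBound.pi fun _ : Fin N => hasMGFBound_rowForm_sub_restrict hu ?_).mono ?_
    · rw [ht, inv_mul_eq_div, div_le_iff₀ hs]
      linarith
    · rw [← sq_abs, ht, inv_pow, Real.sq_sqrt N.cast_nonneg, Finset.sum_const, Finset.card_univ,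
        Fintype.card_fin, nsmul_eq_mul]
      exact (by field_simp : _ = _).le
  have hpi : {Y : Fin N → Fin n → ℝ | ∀ i, |rowDeviation (Y i)| ≤ B} = Set.univ.pi fun _ => G := by
    ext Y; simp [hG]
  rw [hpi, ← Measure.restrict_apply' (MeasurableSet.univ_pi fun _ => hGm), iidGaussVec,
    Measure.restrict_pi_pi, div_eq_inv_mul]
  exact (hmgf (abs_of_pos (inv_pos.2 hs))).measure_lt_abs_le
    (hmgf (by rw [abs_neg, abs_of_pos (inv_pos.2 hs)])) (inv_pos.2 hs).le a

theorem hasMGFBound_rowDeviation {θ : ℝ} (hθ : |θ| ≤ 1 / 4) :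
    HasMGFBound rowDeviation (gaussVec n 1) θ (2 * θ ^ 2 * n + |θ|) := by
  have hshift : rowDeviation = fun x : Fin n → ℝ => (x ⬝ᵥ x - n) + 1 := by
    ext x; rw [rowDeviation]; ring
  rw [hshift]
  exact ((hasMGFBound_dotProduct_self_sub_gaussVec n hθ).add_const 1).mono
    (by linarith [le_abs_self θ])

theorem gaussVec_lt_abs_rowDeviation_le [NeZero n] (B : ℝ) :
    gaussVec n 1 {x | B < |rowDeviation x|} ≤
      ENNReal.ofReal (2 * Real.exp (3 / 8 - B / (4 * √(n : ℝ)))) := by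
  set θ : ℝ := 1 / (4 * √(n : ℝ))
  have hs : 1 ≤ √(n : ℝ) := one_le_sqrt_natCast
  have hθ0 : 0 < θ := by positivity
  have hθ4 : θ ≤ 1 / 4 := one_div_le_one_div_of_le (by norm_num) (by linarith)
  have hθn : θ ^ 2 * n = 1 / 16 := (inv_mul_sqrt_sq_mul_self (by norm_num)).trans (by norm_num)
  have hmgf {t : ℝ} (ht : |t| = θ) :
      HasMGFBound (rowDeviation (n := n)) (gaussVec n 1) t (3 / 8) :=
    (hasMGFBound_rowDeviation (ht.trans_le hθ4)).mono (by rw [← sq_abs, ht]; linarith)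
  rw [div_eq_mul_one_div B, mul_comm B]
  exact (hmgf (abs_of_pos hθ0)).measure_lt_abs_le (hmgf (by rw [abs_neg, abs_of_pos hθ0]))
    hθ0.le B

theorem iidGaussVec_exists_lt_abs_rowDeviation_le [NeZero n] (B : ℝ) :
    iidGaussVec N n 1 {Y | ∃ i, B < |rowDeviation (Y i)|} ≤
      ENNReal.ofReal (N * (2 * Real.exp (3 / 8 - B / (4 * √(n : ℝ))))) := by
  have hrow (i : Fin N) : iidGaussVec N n 1 (Function.eval i ⁻¹' {x | B < |rowDeviation x|}) ≤
      ENNReal.ofReal (2 * Real.exp (3 / 8 - B / (4 * √(n : ℝ)))) := by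
    have hmp : MeasurePreserving (Function.eval i) (iidGaussVec N n 1) (gaussVec n 1) :=
      measurePreserving_eval (fun _ : Fin N => gaussVec n 1) i
    rw [hmp.measure_preimage (measurableSet_lt measurable_const (by fun_prop)).nullMeasurableSet]
    exact gaussVec_lt_abs_rowDeviation_le B
  have hunion : {Y : Fin N → Fin n → ℝ | ∃ i, B < |rowDeviation (Y i)|} =
      ⋃ i, Function.eval i ⁻¹' {x | B < |rowDeviation x|} := by
    ext Y; simp
  rw [hunion]
  refine (measure_iUnion_fintype_le _ _).trans ((Finset.sum_le_sum fun i _ => hrow i).trans_eq ?_)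
  rw [Finset.sum_const, Finset.card_univ, Fintype.card_fin, nsmul_eq_mul,
    ENNReal.ofReal_mul (Nat.cast_nonneg N), ENNReal.ofReal_natCast]

end RowFormTail

section NullTail

variable {N n : ℕ}

theorem map_inv_sqrt_smul_iidGaussVec (N k : ℕ) (m : NNReal) :
    (iidGaussVec N k 1).map ((√(m : ℝ))⁻¹ • ·) = iidGaussVec N k m⁻¹ := by
  have hreal : (gaussianReal 0 1).map ((√(m : ℝ))⁻¹ • ·) = gaussianReal 0 m⁻¹ := by
    simp only [smul_eq_mul]
    rw [gaussianReal_map_const_mul]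
    congr 1
    · rw [mul_zero]
    · ext; simp
  have hvec : (gaussVec k 1).map ((√(m : ℝ))⁻¹ • ·) = gaussVec k m⁻¹ := by
    have : IsProbabilityMeasure ((gaussianReal 0 1).map ((√(m : ℝ))⁻¹ • ·)) :=
      hreal ▸ inferInstance
    rw [gaussVec, gaussVec, ← hreal]
    exact Measure.pi_map_pi (f := fun _ : Fin k => ((√(m : ℝ))⁻¹ • ·))
      fun _ => (measurable_const_smul _).aemeasurable
  have : IsProbabilityMeasure ((gaussVec k 1).map ((√(m : ℝ))⁻¹ • ·)) := hvec ▸ inferInstance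
  rw [iidGaussVec, iidGaussVec, ← hvec]
  exact Measure.pi_map_pi (f := fun (_ : Fin N) => ((√(m : ℝ))⁻¹ • ·))
    fun _ => (measurable_const_smul _).aemeasurable

theorem dotProduct_specMat_inv_sqrt_smul_mulVec [NeZero N] (Y : Fin N → Fin n → ℝ)
    {u : Fin n → ℝ} (hu : u ⬝ᵥ u = 1) :
    u ⬝ᵥ specMat (of ((√(N : ℝ))⁻¹ • Y)) *ᵥ u = (∑ i, (rowForm u (Y i) - 3)) / (N : ℝ) ^ 2 := by
  have hN : (N : ℝ) ≠ 0 := Nat.cast_ne_zero.2 (NeZero.ne N)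
  have hsq : (√(N : ℝ))⁻¹ ^ 2 = (N : ℝ)⁻¹ := by rw [inv_pow, Real.sq_sqrt N.cast_nonneg]
  have hrow (i : Fin N) : of ((√(N : ℝ))⁻¹ • Y) i = (√(N : ℝ))⁻¹ • Y i := rfl
  simp only [dotProduct_specMat_mulVec, hrow, smul_dotProduct, dotProduct_smul, smul_eq_mul,
    ← mul_assoc, ← sq, mul_pow, hsq, hu, rowForm, rowDeviation]
  rw [Finset.sum_sub_distrib, sub_div _ _ ((N : ℝ) ^ 2), Finset.sum_div, Finset.sum_const,
    Finset.card_univ, Fintype.card_fin, nsmul_eq_mul]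
  congr 1
  · refine Finset.sum_congr rfl fun i _ => ?_
    field_simp
  · field_simp

theorem setOf_lt_specNorm_specMat_subset [NeZero N] {T : Finset (Fin n → ℝ)}
    (hT : ∀ u ∈ T, u ⬝ᵥ u = 1)
    (hnet : ∀ M : Matrix (Fin n) (Fin n) ℝ, M.IsSymm → ∃ u ∈ T, specNorm M ≤ 2 * |u ⬝ᵥ M *ᵥ u|)
    (B t : ℝ) :
    {Y : Fin N → Fin n → ℝ | 2 * t / N < specNorm (specMat (of ((√(N : ℝ))⁻¹ • Y)))} ⊆
      {Y | ∃ i, B < |rowDeviation (Y i)|} ∪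
        ⋃ u ∈ T, {Y | t * N < |∑ i, (rowForm u (Y i) - 3)|} ∩
          {Y | ∀ i, |rowDeviation (Y i)| ≤ B} := by
  intro Y hY
  have hN : (0 : ℝ) < N := Nat.cast_pos.2 (NeZero.pos N)
  by_cases hYB : ∃ i, B < |rowDeviation (Y i)|
  · exact Or.inl hYB
  · push Not at hYB
    obtain ⟨u, hu, hle⟩ := hnet _ (specMat_isSymm (of ((√(N : ℝ))⁻¹ • Y)))
    refine Or.inr (Set.mem_biUnion hu ⟨?_, hYB⟩)
    rw [dotProduct_specMat_inv_sqrt_smul_mulVec Y (hT u hu), abs_div, abs_of_pos (pow_pos hN 2)]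
      at hle
    have hlt := lt_of_lt_of_le hY hle
    rw [mul_div_assoc, mul_lt_mul_iff_right₀ two_pos, lt_div_iff₀ (by positivity)] at hlt
    calc t * N = t / N * N ^ 2 := by field_simp
      _ < _ := hlt

theorem iidGaussVec_lt_specNorm_specMat_le [NeZero N] [NeZero n] {B : ℝ}
    (hB : B ≤ √(N : ℝ) / 8) (t : ℝ) :
    iidGaussVec N n (N : NNReal)⁻¹ {Y | 2 * t / N < specNorm (specMat (of Y))} ≤
      ENNReal.ofReal (N * (2 * Real.exp (3 / 8 - B / (4 * √(n : ℝ)))) +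
        5 ^ n * (2 * Real.exp (100000 * n - √(N : ℝ) * t))) := by
  obtain ⟨T, hT, hcard, hnet⟩ := exists_finset_specNorm_le n
  have hterm (u) (hu : u ∈ T) := iidGaussVec_lt_abs_sum_rowForm_sub_le (hT u hu) hB (t * N)
  have hscale : t * N / √(N : ℝ) = √(N : ℝ) * t := by
    rw [mul_div_assoc, Real.div_sqrt, mul_comm]
  rw [hscale] at hterm
  rw [← map_inv_sqrt_smul_iidGaussVec, NNReal.coe_natCast, Measure.map_apply (by fun_prop)
    (measurableSet_lt measurable_const continuous_specNorm_specMat.measurable)]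
  refine (measure_mono (setOf_lt_specNorm_specMat_subset hT hnet B t)).trans
    ((measure_union_le _ _).trans ?_)
  rw [ENNReal.ofReal_add (by positivity) (by positivity)]
  refine add_le_add (iidGaussVec_exists_lt_abs_rowDeviation_le B) ?_
  refine (measure_biUnion_finset_le _ _).trans ((Finset.sum_le_sum hterm).trans ?_)
  rw [Finset.sum_const, nsmul_eq_mul, ENNReal.ofReal_mul (p := 5 ^ n) (by positivity)]
  gcongr
  rw [← ENNReal.ofReal_natCast]
  exact ENNReal.ofReal_le_ofReal (mod_cast hcard)

end NullTail

section BernoulliRademacher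

variable {N : ℕ} {ρ : ℝ}

theorem isProbabilityMeasure_brMeasure (N : ℕ) (hρ : 0 ≤ ρ) (hρ1 : ρ ≤ 1) :
    IsProbabilityMeasure (brMeasure N ρ) := by
  have hmass : (1 - ρ).toNNReal + (ρ / 2).toNNReal + (ρ / 2).toNNReal = 1 := by
    rw [← Real.toNNReal_add (by linarith) (by linarith), ← Real.toNNReal_add (by linarith)
      (by linarith), ← Real.toNNReal_one]
    congr 1
    ring
  constructor
  simp only [brMeasure, Measure.add_apply, Measure.smul_apply, measure_univ, ENNReal.smul_def,
    smul_eq_mul, mul_one]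
  exact mod_cast hmass

theorem isProbabilityMeasure_brVec (N : ℕ) (hρ : 0 ≤ ρ) (hρ1 : ρ ≤ 1) :
    IsProbabilityMeasure (brVec N ρ) := by
  have := isProbabilityMeasure_brMeasure N hρ hρ1
  unfold brVec
  infer_instance

theorem integrable_and_integral_brMeasure (N : ℕ) (hρ : 0 ≤ ρ) (hρ1 : ρ ≤ 1) (f : ℝ → ℝ) :
    Integrable f (brMeasure N ρ) ∧ ∫ x, f x ∂(brMeasure N ρ) =
      (1 - ρ) * f 0 + ρ / 2 * f (√(N * ρ))⁻¹ + ρ / 2 * f (-(√(N * ρ))⁻¹) := by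
  have hdirac (a : NNReal) (x : ℝ) : Integrable f (a • Measure.dirac x) :=
    (integrable_dirac (by simp)).smul_measure_nnreal
  refine ⟨((hdirac _ _).add_measure (hdirac _ _)).add_measure (hdirac _ _), ?_⟩
  rw [brMeasure, integral_add_measure ((hdirac _ _).add_measure (hdirac _ _)) (hdirac _ _),
    integral_add_measure (hdirac _ _) (hdirac _ _)]
  simp only [integral_smul_nnreal_measure, integral_dirac, NNReal.smul_def, smul_eq_mul,
    Real.coe_toNNReal _ (by linarith : 0 ≤ 1 - ρ), Real.coe_toNNReal _ (by linarith : 0 ≤ ρ / 2)]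

theorem mul_inv_sqrt_sq {a : ℝ} (ha : 0 < a) : a * (√a)⁻¹ ^ 2 = 1 := by
  rw [inv_pow, Real.sq_sqrt ha.le, mul_inv_cancel₀ ha.ne']

theorem ae_brMeasure_mul_sq_le_one [NeZero N] (hρ : 0 < ρ) :
    ∀ᵐ x ∂(brMeasure N ρ), N * ρ * x ^ 2 ≤ 1 := by
  have hN : (0 : ℝ) < N := Nat.cast_pos.2 (NeZero.pos N)
  have hatom := (mul_inv_sqrt_sq (mul_pos hN hρ)).le
  have hm : MeasurableSet {x : ℝ | N * ρ * x ^ 2 ≤ 1} :=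
    measurableSet_le (by fun_prop) measurable_const
  simp only [brMeasure, ae_add_measure_iff]
  refine ⟨⟨Measure.ae_smul_measure ?_ _, Measure.ae_smul_measure ?_ _⟩,
    Measure.ae_smul_measure ?_ _⟩ <;> rw [ae_dirac_iff hm]
  · simp
  · exact hatom
  · rwa [neg_sq]

theorem ae_brVec_mul_sq_le_one [NeZero N] (hρ : 0 < ρ) (hρ1 : ρ ≤ 1) :
    ∀ᵐ v ∂(brVec N ρ), ∀ i, N * ρ * v i ^ 2 ≤ 1 := by
  have := isProbabilityMeasure_brMeasure N hρ.le hρ1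
  exact ae_all_iff.2 fun i => (measurePreserving_eval (fun _ : Fin N => brMeasure N ρ)
    i).quasiMeasurePreserving.ae (ae_brMeasure_mul_sq_le_one hρ)

/-- `(N ρ x²)²` is Bernoulli with parameter `ρ` under `brMeasure N ρ`. -/
theorem hasMGFBound_sq_sub_brMeasure [NeZero N] (hρ : 0 < ρ) (hρ1 : ρ ≤ 1) {t : ℝ}
    (ht : |t| ≤ 1) :
    HasMGFBound (fun x => (N * ρ * x ^ 2) ^ 2 - ρ) (brMeasure N ρ) t (ρ * t ^ 2) := by
  have hN : (0 : ℝ) < N := Nat.cast_pos.2 (NeZero.pos N)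
  obtain ⟨hint, heq⟩ := integrable_and_integral_brMeasure N hρ.le hρ1
    fun x => Real.exp (t * ((N * ρ * x ^ 2) ^ 2 - ρ))
  refine ⟨hint, heq.trans_le ?_⟩
  have hexp := (abs_le.1 (Real.abs_exp_sub_one_sub_id_le ht)).2
  rw [neg_sq, mul_inv_sqrt_sq (mul_pos hN hρ)]
  calc (1 - ρ) * Real.exp (t * ((N * ρ * 0 ^ 2) ^ 2 - ρ)) +
        ρ / 2 * Real.exp (t * (1 ^ 2 - ρ)) + ρ / 2 * Real.exp (t * (1 ^ 2 - ρ))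
      = Real.exp (-(t * ρ)) * (1 + ρ * (Real.exp t - 1)) := by
        rw [show t * (1 ^ 2 - ρ) = -(t * ρ) + t by ring, Real.exp_add]
        ring_nf
    _ ≤ Real.exp (-(t * ρ)) * Real.exp (t * ρ + ρ * t ^ 2) := by
        gcongr
        exact le_trans (by nlinarith) (Real.add_one_le_exp _)
    _ = Real.exp (ρ * t ^ 2) := by rw [← Real.exp_add]; ring_nf

theorem brVec_lt_abs_sum_sq_sub_le [NeZero N] (hρ : 0 < ρ) (hρ1 : ρ ≤ 1) {c : ℝ}
    (hc : 0 ≤ c) (hc2 : c ≤ 2) :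
    brVec N ρ {v | c * (N * ρ) < |∑ i, ((N * ρ * v i ^ 2) ^ 2 - ρ)|} ≤
      ENNReal.ofReal (2 * Real.exp (-(N * ρ * c ^ 2 / 4))) := by
  have := isProbabilityMeasure_brMeasure N hρ.le hρ1
  have hc' : |c / 2| ≤ 1 := by rw [abs_of_nonneg (by positivity)]; linarith
  have hmgf {t : ℝ} (ht : |t| = |c / 2|) :
      HasMGFBound (fun v => ∑ i, ((N * ρ * v i ^ 2) ^ 2 - ρ)) (brVec N ρ) t
        (N * (ρ * (c / 2) ^ 2)) := by
    refine (HasMGFBound.pi fun _ : Fin N =>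
      hasMGFBound_sq_sub_brMeasure hρ hρ1 (ht.trans_le hc')).mono (le_of_eq ?_)
    rw [(sq_eq_sq_iff_abs_eq_abs _ _).2 ht, Finset.sum_const, Finset.card_univ,
      Fintype.card_fin, nsmul_eq_mul]
  refine ((hmgf rfl).measure_lt_abs_le (hmgf (abs_neg _)) (by positivity) _).trans_eq ?_
  ring_nf

end BernoulliRademacher

section Noise

variable {N : ℕ}

theorem iidGaussVec_one_lt_abs_sum_mul_le (k : ℕ) {a : Fin N → ℝ} (ha : ∀ i, |a i| ≤ 1) {c : ℝ}
    (hc : 0 ≤ c) (hc1 : c ≤ 1) :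
    iidGaussVec N k 1 {Y | c * N < |∑ i, a i * (Y i ⬝ᵥ Y i - k)|} ≤
      ENNReal.ofReal (2 * Real.exp (-(c ^ 2 * N / (8 * (k + 1))))) := by
  set θ : ℝ := c / (4 * (k + 1))
  have hθ0 : 0 ≤ θ := by positivity
  have hθ4 : θ ≤ 1 / 4 := by
    rw [div_le_div_iff₀ (by positivity) (by norm_num)]
    nlinarith
  have hmgf {t : ℝ} (ht : |t| = θ) :
      HasMGFBound (fun Y : Fin N → Fin k → ℝ => ∑ i, a i * (Y i ⬝ᵥ Y i - k)) (iidGaussVec N k 1) t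
        (N * (2 * θ ^ 2 * (k + 1))) := by
    have hrow (i : Fin N) : HasMGFBound (fun x => a i * (x ⬝ᵥ x - k)) (gaussVec k 1) t
        (2 * θ ^ 2 * (k + 1)) := by
      have hta : |t * a i| ≤ θ := by
        rw [abs_mul, ht]
        exact mul_le_of_le_one_right hθ0 (ha i)
      refine (hasMGFBound_dotProduct_self_sub_gaussVec k (hta.trans hθ4)).const_mul.mono ?_
      rw [← sq_abs]
      gcongr
      linarith
    refine (HasMGFBound.pi hrow).mono (le_of_eq ?_)
    rw [Finset.sum_const, Finset.card_univ, Fintype.card_fin, nsmul_eq_mul]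
  have : IsProbabilityMeasure (iidGaussVec N k 1) := by unfold iidGaussVec; infer_instance
  refine ((hmgf (abs_of_nonneg hθ0)).measure_lt_abs_le
    (hmgf (by rw [abs_neg, abs_of_nonneg hθ0])) hθ0 _).trans_eq ?_
  congr 3
  simp only [θ]
  field_simp
  ring

theorem iidGaussVec_inv_lt_abs_sum_mul_le [NeZero N] (k : ℕ) {a : Fin N → ℝ}
    (ha : ∀ i, |a i| ≤ 1) {c : ℝ} (hc : 0 ≤ c) (hc1 : c ≤ 1) :
    iidGaussVec N k (N : NNReal)⁻¹ {Y | c < |∑ i, a i * (Y i ⬝ᵥ Y i - k / N)|} ≤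
      ENNReal.ofReal (2 * Real.exp (-(c ^ 2 * N / (8 * (k + 1))))) := by
  have hN : (0 : ℝ) < N := Nat.cast_pos.2 (NeZero.pos N)
  have hscale (Y : Fin N → Fin k → ℝ) :
      ∑ i, a i * (((√(N : ℝ))⁻¹ • Y) i ⬝ᵥ ((√(N : ℝ))⁻¹ • Y) i - k / N) =
        (∑ i, a i * (Y i ⬝ᵥ Y i - k)) / N := by
    have hsq : (√(N : ℝ))⁻¹ ^ 2 = (N : ℝ)⁻¹ := by rw [inv_pow, Real.sq_sqrt N.cast_nonneg]
    rw [Finset.sum_div]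
    refine Finset.sum_congr rfl fun i _ => ?_
    rw [Pi.smul_apply, smul_dotProduct, dotProduct_smul, smul_eq_mul, smul_eq_mul, ← mul_assoc,
      ← sq, hsq]
    field_simp
  have hmeas : MeasurableSet
      {Y : Fin N → Fin k → ℝ | c < |∑ i, a i * (Y i ⬝ᵥ Y i - k / N)|} :=
    measurableSet_lt measurable_const (by unfold dotProduct; fun_prop)
  rw [← map_inv_sqrt_smul_iidGaussVec, NNReal.coe_natCast, Measure.map_apply (by fun_prop) hmeas]
  simp only [Set.preimage_ofPred_eq, hscale, abs_div, abs_of_pos hN, lt_div_iff₀ hN]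
  exact iidGaussVec_one_lt_abs_sum_mul_le k ha hc hc1

end Noise

section Planted

variable {N n : ℕ}

theorem rowCat_zero [NeZero n] (a : ℝ) (b : Fin (n - 1) → ℝ) : rowCat a b (0 : Fin n) = a := by
  simp [rowCat]

theorem rowCat_dotProduct_self [NeZero n] (a : ℝ) (b : Fin (n - 1) → ℝ) :
    (rowCat a b : Fin n → ℝ) ⬝ᵥ rowCat a b = a ^ 2 + b ⬝ᵥ b := by
  obtain ⟨m, rfl⟩ := Nat.exists_eq_succ_of_ne_zero (NeZero.ne n)
  rw [dotProduct, Fin.sum_univ_succ]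
  simp [rowCat, dotProduct, sq]

theorem single_dotProduct_specMat_gaussBasis_mulVec [NeZero N] [NeZero n] {ρ : ℝ} (hρ : 0 < ρ)
    (v : Fin N → ℝ) (B : Fin N → Fin (n - 1) → ℝ) :
    Pi.single 0 1 ⬝ᵥ specMat (gaussBasis v B : Matrix (Fin N) (Fin n) ℝ) *ᵥ Pi.single 0 1 =
      ((∑ i, ((N * ρ * v i ^ 2) ^ 2 - ρ)) / (N * ρ) +
        ∑ i, N * ρ * v i ^ 2 * (B i ⬝ᵥ B i - (n - 1 : ℕ) / N) + (1 - 3 * ρ)) / (N * ρ) := by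
  have hN : (0 : ℝ) < N := Nat.cast_pos.2 (NeZero.pos N)
  have hrow (i : Fin N) : (gaussBasis v B : Matrix (Fin N) (Fin n) ℝ) i = rowCat (v i) (B i) := rfl
  rw [dotProduct_specMat_mulVec]
  simp only [single_one_dotProduct, hrow, rowCat_dotProduct_self,
    rowCat_zero, Pi.single_eq_same, mul_one, Nat.cast_pred (NeZero.pos n)]
  have hterm (i : Fin N) : (v i ^ 2 + B i ⬝ᵥ B i - ((n : ℝ) - 1) / N) * v i ^ 2 =
      (N * ρ * v i ^ 2) ^ 2 / (N * ρ) ^ 2 +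
        N * ρ * v i ^ 2 * (B i ⬝ᵥ B i - ((n : ℝ) - 1) / N) / (N * ρ) := by
    field_simp
    ring
  have hsum : ∑ i, ((N * ρ * v i ^ 2) ^ 2 - ρ) = ∑ i, (N * ρ * v i ^ 2) ^ 2 - N * ρ := by
    simp [Finset.sum_sub_distrib]
  rw [hsum, Finset.sum_congr rfl fun i _ => hterm i, Finset.sum_add_distrib, ← Finset.sum_div,
    ← Finset.sum_div]
  field_simp
  ring

theorem le_specNorm_specMat_gaussBasis_mul [NeZero N] [NeZero n] {ρ c : ℝ} (hρ : 0 < ρ)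
    (hρc : c ≤ |ρ - 1 / 3|) {v : Fin N → ℝ} {B : Fin N → Fin (n - 1) → ℝ}
    {Q : Matrix (Fin n) (Fin n) ℝ} (hQ : Qᵀ * Q = 1)
    (hv : |∑ i, ((N * ρ * v i ^ 2) ^ 2 - ρ)| ≤ c * (N * ρ))
    (hB : |∑ i, N * ρ * v i ^ 2 * (B i ⬝ᵥ B i - (n - 1 : ℕ) / N)| ≤ c) :
    c / (N * ρ) ≤ specNorm (specMat (gaussBasis v B * Q)) := by
  have hNρ : 0 < N * ρ := mul_pos (Nat.cast_pos.2 (NeZero.pos N)) hρ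
  have hunit : (Pi.single 0 1 : Fin n → ℝ) ⬝ᵥ Pi.single 0 1 = 1 := by simp
  refine le_trans ?_ (abs_dotProduct_specMat_mulVec_le_specNorm_mul (gaussBasis v B) hQ hunit)
  rw [single_dotProduct_specMat_gaussBasis_mulVec hρ, abs_div, abs_of_pos hNρ]
  have hv' : |(∑ i, ((N * ρ * v i ^ 2) ^ 2 - ρ)) / (N * ρ)| ≤ c := by
    rwa [abs_div, abs_of_pos hNρ, div_le_iff₀ hNρ]
  have hgap : 3 * c ≤ |1 - 3 * ρ| := by
    rw [show 1 - 3 * ρ = -3 * (ρ - 1 / 3) by ring, abs_mul]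
    norm_num
    linarith
  gcongr
  rw [abs_le] at hv' hB
  rcases le_abs.1 hgap with h | h
  · exact le_abs.2 (Or.inl (by linarith))
  · exact le_abs.2 (Or.inr (by linarith))

theorem measurable_gaussBasis_mul :
    Measurable fun w : (Fin N → ℝ) × (Fin n → Fin n → ℝ) × (Fin N → Fin (n - 1) → ℝ) =>
      fun i j => (gaussBasis w.1 w.2.2 * of w.2.1) i j := by
  refine measurable_pi_iff.2 fun i => measurable_pi_iff.2 fun j => ?_
  simp only [mul_apply, gaussBasis, of_apply, rowCat]
  refine Finset.measurable_sum _ fun k _ => Measurable.mul ?_ (by fun_prop)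
  split_ifs <;> fun_prop

theorem prod_apply_le_of_ae {α β : Type*} [MeasurableSpace α] [MeasurableSpace β] {μ : Measure α}
    [IsProbabilityMeasure μ] {ν : Measure β} [SFinite ν] {s : Set (α × β)} {b : ENNReal}
    (hs : MeasurableSet s) (h : ∀ᵐ x ∂μ, ν (Prod.mk x ⁻¹' s) ≤ b) : μ.prod ν s ≤ b := by
  rw [Measure.prod_apply hs]
  exact (lintegral_mono_ae h).trans_eq (by simp)

theorem brVec_prod_iidGaussVec_lt_abs_sum_le [NeZero N] (k : ℕ) {ρ : ℝ} (hρ : 0 < ρ) (hρ1 : ρ ≤ 1)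
    {c : ℝ} (hc : 0 ≤ c) (hc1 : c ≤ 1) :
    (brVec N ρ).prod (iidGaussVec N k (N : NNReal)⁻¹)
      {w | c < |∑ i, N * ρ * w.1 i ^ 2 * (w.2 i ⬝ᵥ w.2 i - k / N)|} ≤
      ENNReal.ofReal (2 * Real.exp (-(c ^ 2 * N / (8 * (k + 1))))) := by
  have := isProbabilityMeasure_brVec N hρ.le hρ1
  have : IsProbabilityMeasure (iidGaussVec N k (N : NNReal)⁻¹) := by
    unfold iidGaussVec; infer_instance
  refine prod_apply_le_of_ae
    (measurableSet_lt measurable_const (by unfold dotProduct; fun_prop)) ?_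
  filter_upwards [ae_brVec_mul_sq_le_one hρ hρ1] with v hv
  exact iidGaussVec_inv_lt_abs_sum_mul_le k
    (fun i => (abs_of_nonneg (by positivity)).trans_le (hv i)) hc hc1

theorem planted_specNorm_specMat_lt_le [NeZero N] [NeZero n] {ρ c : ℝ} (hρ : 0 < ρ)
    (hρ1 : ρ ≤ 1) (hc : 0 ≤ c) (hc1 : c ≤ 1) (hρc : c ≤ |ρ - 1 / 3|)
    (μQ : Measure (Fin n → Fin n → ℝ)) [IsProbabilityMeasure μQ]
    (hQ : ∀ᵐ Q ∂μQ, (of Q)ᵀ * of Q = 1) :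
    Measure.map
      (fun w : (Fin N → ℝ) × (Fin n → Fin n → ℝ) × (Fin N → Fin (n - 1) → ℝ) =>
        fun i j => (gaussBasis w.1 w.2.2 * of w.2.1) i j)
      ((brVec N ρ).prod (μQ.prod (iidGaussVec N (n - 1) (N : NNReal)⁻¹)))
      {Y : Fin N → Fin n → ℝ | specNorm (specMat (of Y)) < c / (N * ρ)} ≤
    ENNReal.ofReal (2 * Real.exp (-(N * ρ * c ^ 2 / 4)) +
      2 * Real.exp (-(c ^ 2 * N / (8 * n)))) := by
  have := isProbabilityMeasure_brVec N hρ.le hρ1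
  set ν := iidGaussVec N (n - 1) (N : NNReal)⁻¹
  have : IsProbabilityMeasure ν := by unfold ν iidGaussVec; infer_instance
  set A : Set (Fin N → ℝ) := {v | c * (N * ρ) < |∑ i, ((N * ρ * v i ^ 2) ^ 2 - ρ)|}
  set D : Set ((Fin N → ℝ) × (Fin N → Fin (n - 1) → ℝ)) :=
    {w | c < |∑ i, N * ρ * w.1 i ^ 2 * (w.2 i ⬝ᵥ w.2 i - (n - 1 : ℕ) / N)|}
  have hA : MeasurableSet A := measurableSet_lt measurable_const (by fun_prop)
  have hD : MeasurableSet D := measurableSet_lt measurable_const (by unfold dotProduct; fun_prop)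
  have hforget : MeasurePreserving (Prod.map id Prod.snd) ((brVec N ρ).prod (μQ.prod ν))
      ((brVec N ρ).prod ν) := (MeasurePreserving.id _).prod measurePreserving_snd
  have hfar : ∀ᵐ w ∂((brVec N ρ).prod (μQ.prod ν)),
      specNorm (specMat (gaussBasis w.1 w.2.2 * of w.2.1)) < c / (N * ρ) →
        w ∈ Prod.fst ⁻¹' A ∪ Prod.map id Prod.snd ⁻¹' D := by
    filter_upwards [(Measure.quasiMeasurePreserving_fst.comp
      Measure.quasiMeasurePreserving_snd).ae hQ] with w hw hlt
    by_contra hgood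
    rw [Set.mem_union, not_or] at hgood
    exact (le_specNorm_specMat_gaussBasis_mul hρ hρc hw (not_lt.1 hgood.1)
      (not_lt.1 hgood.2)).not_gt hlt
  rw [Measure.map_apply measurable_gaussBasis_mul
    (measurableSet_lt continuous_specNorm_specMat.measurable measurable_const),
    ENNReal.ofReal_add (by positivity) (by positivity)]
  refine (measure_mono_ae hfar).trans ((measure_union_le _ _).trans (add_le_add ?_ ?_))
  · rw [measurePreserving_fst.measure_preimage hA.nullMeasurableSet]
    exact brVec_lt_abs_sum_sq_sub_le hρ hρ1 hc (by linarith)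
  · rw [hforget.measure_preimage hD.nullMeasurableSet]
    have hcast : ((n - 1 : ℕ) : ℝ) + 1 = n := by rw [Nat.cast_pred (NeZero.pos n), sub_add_cancel]
    exact hcast ▸ brVec_prod_iidGaussVec_lt_abs_sum_le (n - 1) hρ hρ1 hc hc1

end Planted

section Parameters

variable {N n : ℕ} {c ρ δ κ L : ℝ}

theorem mul_le_mul_sqrt_of_add_mul_le [NeZero N] (hρ : 0 ≤ ρ) (hL : 0 ≤ L)
    (h : (n * ρ / √(N : ℝ) + √((n : ℝ) / N)) * L ≤ κ) :
    n * ρ * L ≤ κ * √(N : ℝ) ∧ √(n : ℝ) * L ≤ κ * √(N : ℝ) := by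
  have hs : 0 < √(N : ℝ) := zero_lt_one.trans_le one_le_sqrt_natCast
  have hsum : n * ρ * L + √(n : ℝ) * L ≤ κ * √(N : ℝ) := by
    rw [← div_le_iff₀ hs]
    rw [Real.sqrt_div n.cast_nonneg] at h
    exact (by ring : _ = _).trans_le h
  have h1 : 0 ≤ n * ρ * L := by positivity
  have h2 : 0 ≤ √(n : ℝ) * L := by positivity
  constructor <;> linarith

theorem four_le_and_one_le_log_div [NeZero N] [NeZero n] (hδ : 0 < δ) (hδ2 : δ ≤ 1 / 2)
    (h : √(n : ℝ) * Real.log (N / δ) ≤ √(N : ℝ) / 4) :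
    (4 : ℝ) ≤ N ∧ 1 ≤ Real.log (N / δ) := by
  have hlog2 := Real.log_two_gt_d9
  have hlog {a : ℝ} (ha : 0 < a) (haN : a ≤ N) : Real.log (a * 2) ≤ Real.log (N / δ) := by
    refine Real.log_le_log (mul_pos ha two_pos) ((le_div_iff₀ hδ).2 ?_)
    calc a * 2 * δ ≤ a * 2 * (1 / 2) := by gcongr
      _ ≤ N := by linarith
  have hN1 : (1 : ℝ) ≤ N := Nat.one_le_cast.2 (NeZero.pos N)
  have hhalf := hlog one_pos hN1
  have hN4 : (4 : ℝ) ≤ N := by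
    have hsqrt : 2 ≤ √(N : ℝ) := by
      nlinarith [one_le_sqrt_natCast (n := n)]
    have := Real.le_sqrt' two_pos |>.1 hsqrt
    linarith
  refine ⟨hN4, le_trans ?_ (hlog four_pos hN4)⟩
  rw [show (4 : ℝ) * 2 = 2 ^ 3 by norm_num, Real.log_pow]
  push_cast
  linarith

theorem exp_neg_mul_sq_div_four_le [NeZero N] (hc : 0 < c) (hδ : 0 < δ)
    (h : 16 / c ^ 2 * Real.log (1 / δ) / N ≤ ρ) :
    Real.exp (-(N * ρ * c ^ 2 / 4)) ≤ δ ^ 4 := by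
  have hN : (0 : ℝ) < N := Nat.cast_pos.2 (NeZero.pos N)
  have hlog : 16 * Real.log (1 / δ) ≤ N * ρ * c ^ 2 := by
    rwa [div_le_iff₀ hN, div_mul_eq_mul_div, div_le_iff₀ (by positivity), mul_comm ρ] at h
  rw [one_div, Real.log_inv] at hlog
  rw [← Real.le_log_iff_exp_le (by positivity), Real.log_pow]
  push_cast
  linarith

theorem two_mul_le_mul_div_of_sqrt_mul_le [NeZero n] (hL : 1 ≤ L)
    (h : √(n : ℝ) * L ≤ c / 4 * √(N : ℝ)) : 2 * L ≤ c ^ 2 * N / (8 * n) := by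
  have hn : (0 : ℝ) < n := Nat.cast_pos.2 (NeZero.pos n)
  have hsq : n * L ^ 2 ≤ c ^ 2 / 16 * N := by
    calc n * L ^ 2 = (√(n : ℝ) * L) ^ 2 := by rw [mul_pow, Real.sq_sqrt n.cast_nonneg]
      _ ≤ (c / 4 * √(N : ℝ)) ^ 2 := by gcongr
      _ = c ^ 2 / 16 * N := by rw [mul_pow, Real.sq_sqrt N.cast_nonneg]; ring
  have hlin : n * L ≤ n * L ^ 2 := by
    gcongr
    exact le_self_pow₀ hL two_ne_zero
  rw [le_div_iff₀ (by positivity)]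
  linarith

theorem five_pow_mul_exp_le [NeZero n] (hρ : 0 < ρ) (hρ1 : ρ ≤ 1) (hL : 1 ≤ L)
    (h1 : n * ρ * L ≤ c / 2000000 * √(N : ℝ)) (h2 : √(n : ℝ) * L ≤ c / 2000000 * √(N : ℝ)) :
    5 ^ n * Real.exp (100000 * n - √(N : ℝ) * (c / (16 * ρ))) ≤ Real.exp (-(2 * L)) := by
  have hnρ : n * ρ ≤ c / 2000000 * √(N : ℝ) :=
    (le_mul_of_one_le_right (by positivity) hL).trans h1
  have hLρ : L * ρ ≤ c / 2000000 * √(N : ℝ) := by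
    refine le_trans ?_ h2
    rw [mul_comm]
    gcongr
    exact hρ1.trans one_le_sqrt_natCast
  have hexponent : 100002 * n + 2 * L ≤ √(N : ℝ) * (c / (16 * ρ)) := by
    have hnρ0 : 0 ≤ n * ρ := by positivity
    rw [← mul_div_assoc, le_div_iff₀ (by positivity)]
    linarith
  have h5 : (5 : ℝ) ^ n ≤ Real.exp (2 * n) := by
    rw [mul_comm, Real.exp_nat_mul]
    gcongr
    exact (by norm_num : (5 : ℝ) ≤ 1 + 2 + 2 ^ 2 / 2).trans
      (Real.quadratic_le_exp_of_nonneg (by norm_num))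
  calc 5 ^ n * Real.exp (100000 * n - √(N : ℝ) * (c / (16 * ρ)))
      ≤ Real.exp (2 * n) * Real.exp (100000 * n - √(N : ℝ) * (c / (16 * ρ))) := by gcongr
    _ ≤ Real.exp (-(2 * L)) := by
      rw [← Real.exp_add]
      gcongr
      linarith

theorem exp_sub_twelve_mul_sqrt_div_le [NeZero n] (hL : 1 ≤ L) :
    Real.exp (3 / 8 - 12 * L * √(n : ℝ) / (4 * √(n : ℝ))) ≤ Real.exp (-(2 * L)) := by
  have hs : 0 < √(n : ℝ) := zero_lt_one.trans_le one_le_sqrt_natCast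
  rw [mul_div_mul_right _ _ hs.ne']
  gcongr
  linarith

theorem tail_sum_le (hδ : 0 < δ) (hδ2 : δ ≤ 1 / 2) (hN : (4 : ℝ) ≤ N) :
    (2 * δ ^ 4 + 2 * (δ / N) ^ 2) + (N * (2 * (δ / N) ^ 2) + 2 * (δ / N) ^ 2) ≤ δ := by
  have hN0 : (N : ℝ) ≠ 0 := by positivity
  have hδN : δ / N ≤ δ / 4 := by gcongr
  have hsq : (δ / N) ^ 2 ≤ δ * (δ / 4) / 4 := by
    calc (δ / N) ^ 2 ≤ (δ / 4) ^ 2 := by gcongr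
      _ = δ * (δ / 4) / 4 := by ring
  have hNsq : N * (δ / N) ^ 2 ≤ δ * (δ / 4) := by
    calc N * (δ / N) ^ 2 = δ * (δ / N) := by field_simp
      _ ≤ δ * (δ / 4) := by gcongr
  have hδ4 : δ ^ 4 ≤ δ * (1 / 2) ^ 3 := by
    calc δ ^ 4 = δ * δ ^ 3 := by ring
      _ ≤ δ * (1 / 2) ^ 3 := by gcongr
  nlinarith

theorem planted_add_null_tail_le [NeZero N] [NeZero n] (hc : 0 < c) (hc1 : c ≤ 1) (hρ : 0 < ρ)
    (hρ1 : ρ ≤ 1) (hδ : 0 < δ) (hδ2 : δ ≤ 1 / 2) (hρδ : 16 / c ^ 2 * Real.log (1 / δ) / N ≤ ρ)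
    (hsmall : (n * ρ / √(N : ℝ) + √((n : ℝ) / N)) * Real.log (N / δ) ≤ c / 2000000) :
    12 * Real.log (N / δ) * √(n : ℝ) ≤ √(N : ℝ) / 8 ∧
      (2 * Real.exp (-(N * ρ * c ^ 2 / 4)) + 2 * Real.exp (-(c ^ 2 * N / (8 * n)))) +
        (N * (2 * Real.exp (3 / 8 - 12 * Real.log (N / δ) * √(n : ℝ) / (4 * √(n : ℝ)))) +
          5 ^ n * (2 * Real.exp (100000 * n - √(N : ℝ) * (c / (16 * ρ))))) ≤ δ := by
  have hN1 : (1 : ℝ) ≤ N := Nat.one_le_cast.2 (NeZero.pos N)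
  set L := Real.log (N / δ)
  have hL0 : 0 ≤ L := Real.log_nonneg ((one_le_div hδ).2 (by linarith))
  obtain ⟨hnρL, hnL⟩ := mul_le_mul_sqrt_of_add_mul_le hρ.le hL0 hsmall
  have hnL_of {κ : ℝ} (hκ : c / 2000000 ≤ κ) : √(n : ℝ) * L ≤ κ * √(N : ℝ) :=
    hnL.trans (mul_le_mul_of_nonneg_right hκ (Real.sqrt_nonneg _))
  obtain ⟨hN4, hL⟩ : (4 : ℝ) ≤ N ∧ 1 ≤ L := four_le_and_one_le_log_div hδ hδ2
    ((hnL_of (κ := 1 / 4) (by linarith)).trans_eq (by ring))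
  refine ⟨by linarith [hnL_of (κ := 1 / 96) (by linarith)],
    le_trans ?_ (tail_sum_le hδ hδ2 hN4)⟩
  have hexp : Real.exp (-(2 * L)) = (δ / N) ^ 2 := by
    rw [two_mul, neg_add, Real.exp_add, Real.exp_neg, Real.exp_log (by positivity), inv_div, sq]
  have hentries := exp_neg_mul_sq_div_four_le hc hδ hρδ
  have hnoise : Real.exp (-(c ^ 2 * N / (8 * n))) ≤ Real.exp (-(2 * L)) :=
    Real.exp_le_exp.2 (neg_le_neg (two_mul_le_mul_div_of_sqrt_mul_le hL (hnL_of (by linarith))))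
  have hrows := exp_sub_twelve_mul_sqrt_div_le (n := n) hL
  have hnet := five_pow_mul_exp_le hρ hρ1 hL hnρL hnL
  rw [hexp] at hnoise hrows hnet
  rw [mul_left_comm (5 ^ n : ℝ)]
  exact add_le_add (by linarith) (by gcongr)

end Parameters

theorem stmt_12_general {N n : ℕ} {c ρ δ : ℝ} (hN : 1 ≤ N) (hn : 1 ≤ n) (hc : 0 < c)
    (hρ : 0 < ρ) (hρ1 : ρ ≤ 1) (hδ : 0 < δ) (hδ2 : δ ≤ 1 / 2)
    (hρδ : 16 / c ^ 2 * Real.log (1 / δ) / N ≤ ρ) (hρc : c ≤ |ρ - 1 / 3|)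
    (hsmall : (n * ρ / √(N : ℝ) + √((n : ℝ) / N)) * Real.log (N / δ) ≤ c / 2000000)
    (μQ : Measure (Fin n → Fin n → ℝ)) [IsProbabilityMeasure μQ]
    (hQ : ∀ᵐ Q ∂μQ, (of Q)ᵀ * of Q = 1) :
    Measure.map
        (fun w : (Fin N → ℝ) × (Fin n → Fin n → ℝ) × (Fin N → Fin (n - 1) → ℝ) =>
          fun i j => (gaussBasis w.1 w.2.2 * of w.2.1) i j)
        ((brVec N ρ).prod (μQ.prod (iidGaussVec N (n - 1) (N : NNReal)⁻¹)))
        {Y : Fin N → Fin n → ℝ | specNorm (specMat (of Y)) < c / (4 * N * ρ)}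
      + iidGaussVec N n (N : NNReal)⁻¹
        {Y : Fin N → Fin n → ℝ | c / (8 * N * ρ) < specNorm (specMat (of Y))}
      ≤ ENNReal.ofReal δ := by
  have : NeZero N := ⟨by omega⟩
  have : NeZero n := ⟨by omega⟩
  have hc1 : c ≤ 1 := hρc.trans (abs_le.2 ⟨by linarith, by linarith⟩)
  obtain ⟨hrow, htail⟩ := planted_add_null_tail_le hc hc1 hρ hρ1 hδ hδ2 hρδ hsmall
  have hplanted := planted_specNorm_specMat_lt_le (N := N) hρ hρ1 hc.le hc1 hρc μQ hQ
  have hnull := iidGaussVec_lt_specNorm_specMat_le (N := N) (n := n) hrow (c / (16 * ρ))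
  rw [show 2 * (c / (16 * ρ)) / N = c / (8 * N * ρ) by field_simp; norm_num] at hnull
  have hthreshold : c / (4 * N * ρ) ≤ c / (N * ρ) := by
    gcongr
    linarith [N.cast_nonneg (α := ℝ)]
  refine (add_le_add ((measure_mono fun Y hY => lt_of_lt_of_le hY hthreshold).trans hplanted)
    hnull).trans ?_
  rw [← ENNReal.ofReal_add (by positivity) (by positivity)]
  exact ENNReal.ofReal_le_ofReal htail

/-- detection via the spectral norm of `M̃`: for the detection problem with
null `𝒬` (i.i.d. `N(0,1/N)` entries) and planted `𝒫` (`Ỹ = YQ`, `v ∼ BR(N,ρ)`, `Q`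
Haar-uniform orthogonal — a probability measure supported on orthogonal matrices and
left-translation invariant), for every constant `c₁ ∈ (0, 0.1)` there exist `C₂, c₃ > 0`
depending only on `c₁` and an absolute `N₀` such that for every `δ ∈ (0, 1/2)`: if
`ρ ≥ C₂ log(1/δ)/N`, `|ρ - 1/3| ≥ c₁`, `N ≥ log⁷(N/δ)` and
`(nρ/√N + √(n/N)) log(N/δ) ≤ c₃`, then
`ℙ_𝒫{‖M̃‖ < c₁/(4Nρ)} + ℙ_𝒬{‖M̃‖ > c₁/(8Nρ)} ≤ δ`. -/
theorem stmt_12 (c₁ : ℝ) (hc₁ : 0 < c₁) (hc₁' : c₁ < 0.1) :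
    ∃ C₂ : ℝ, 0 < C₂ ∧ ∃ c₃ : ℝ, 0 < c₃ ∧ ∃ N₀ : ℕ,
      ∀ N n : ℕ, ∀ ρ δ : ℝ, N₀ ≤ N → 1 ≤ n → n ≤ N → 0 < ρ → ρ ≤ 1 →
        0 < δ → δ < 1 / 2 →
        C₂ * Real.log (1 / δ) / N ≤ ρ →
        c₁ ≤ |ρ - 1 / 3| →
        (Real.log (N / δ)) ^ 7 ≤ N →
        ((n : ℝ) * ρ / Real.sqrt N + Real.sqrt ((n : ℝ) / N)) * Real.log (N / δ) ≤ c₃ →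
        ∀ (μQ : Measure (Fin n → Fin n → ℝ)) [IsProbabilityMeasure μQ],
          (∀ᵐ Q ∂μQ, (Matrix.of Q)ᵀ * Matrix.of Q = 1) →
          (∀ R : Matrix (Fin n) (Fin n) ℝ, Rᵀ * R = 1 →
            Measure.map (fun Q => fun i j => (R * Matrix.of Q) i j) μQ = μQ) →
          (Measure.map
              (fun w : (Fin N → ℝ) × (Fin n → Fin n → ℝ) × (Fin N → Fin (n - 1) → ℝ) =>
                fun i j => (gaussBasis w.1 w.2.2 * Matrix.of w.2.1) i j)
              ((brVec N ρ).prod (μQ.prod (iidGaussVec N (n - 1) ((N : NNReal))⁻¹))))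
              {Y : Fin N → Fin n → ℝ | specNorm (specMat (Matrix.of Y)) < c₁ / (4 * N * ρ)}
            + (Measure.pi fun _ : Fin N =>
                (Measure.pi fun _ : Fin n => gaussianReal 0 ((N : NNReal))⁻¹))
              {Y : Fin N → Fin n → ℝ | specNorm (specMat (Matrix.of Y)) > c₁ / (8 * N * ρ)}
            ≤ ENNReal.ofReal δ :=
  ⟨16 / c₁ ^ 2, by positivity, c₁ / 2000000, by positivity, 1,
    fun _ _ _ _ hN hn _ hρ hρ1 hδ hδ2 hρδ hρc _ hsmall μQ _ hQ _ =>
      stmt_12_general hN hn hc₁ hρ hρ1 hδ hδ2.le hρδ hρc hsmall μQ hQ⟩
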